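/- arXiv:2402.19089 — 4 statements merged into one kernel-verified Lean document; each statement's English description precedes it below -/
import Mathlib

section
/- Let 𝒜 be a standardized completely reachable binary circular DFA on ℤ_n. Then every nonempty subset S ⊆ ℤ_n has a reaching word of length at most n·(n − |S|) + n − 1. -/
/-!
The subgroups `chain δa i` start at the trivial subgroup, and each is generated by the previous
one together with its image under `δa`.

* Unless it is everything, the next subgroup is strictly larger. If `G` is a proper subgroup with
  `δa '' G ⊆ G`, then the complements of the cosets of `G` can only be images of one another, so
  the complement of `G` is unreachable (`eq_top_of_invariant`). Hence `|chain δa i| ≥ 2 ^ i` as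
  long as `chain δa i` is proper.
* Pulling back: for a set `T` and `q ∉ T`, the set `R = {y | δa y + q ∈ T}` is mapped onto `T` by
  `a b^q`. Moreover `|R| ≥ |T|`, and `|R| > |T|` when `δa 0 + q ∈ T`, that is, when `0 ∈ R`.
* Descent (`descend`): let `T` be a union of cosets of `G_i`, but not of `G_{i+1}`. Then some
  `q ∉ T` and `y ∈ G_i` satisfy `q + δa y ∈ T`, and `q` only matters modulo `G_i`, so `q` can be
  taken smaller than the index of `G_i`. The pulled back set either is larger than `T`, or contains
  `y ∈ G_i` but not `0`; in the latter case the argument is repeated inside `G_i`, with rotations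
  which are multiples of the index of `G_i`. The rotations telescope to a total of at most `n - 1`,
  and at most `i + 1` letters `a` are used, so `T` is the image of a larger set under a word of
  length at most `n + i`.
* The excess `i` is paid for by divisibility: `|G_1|, …, |G_i|` all divide `|T|`. As
  `|G_j| ≥ 2 ^ j`, summing over all sizes from `|S|` to `n - 1` gives a total excess of at most
  `∑_{j ≥ 1} (n - 1) / 2 ^ j ≤ n - 1`.
-/

/-- The two-letter alphabet of a binary DFA. -/
inductive Letter where
  | a : Letter
  | b : Letter

/-- Left-to-right action of a word on `ZMod n`, where the letter `b` acts as `q ↦ q + 1`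
(a cyclic permutation) and the letter `a` acts as the given map `δa`. -/
def act {n : ℕ} (δa : ZMod n → ZMod n) : List Letter → ZMod n → ZMod n
  | [], q => q
  | Letter.a :: w, q => act δa w (δa q)
  | Letter.b :: w, q => act δa w (q + 1)

/-- A binary circular DFA is completely reachable if every nonempty subset of states
is the image of the full state set under the action of some word. -/
def CompletelyReachable {n : ℕ} (δa : ZMod n → ZMod n) : Prop :=
  ∀ S : Set (ZMod n), S.Nonempty → ∃ w : List Letter, act δa w '' Set.univ = S

/-- A binary circular DFA is standardized if `0` has no `δa`-preimage and `δa 0` is the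
unique state with more than one `δa`-preimage. -/
def Standardized {n : ℕ} (δa : ZMod n → ZMod n) : Prop :=
  (∀ q : ZMod n, δa q ≠ 0) ∧
  ∀ p : ZMod n, 1 < {q : ZMod n | δa q = p}.ncard ↔ p = δa 0

/-- The orbit `O(𝒜) = {δa^i(0) : i ≥ 1}`. -/
def orbitSet {n : ℕ} (δa : ZMod n → ZMod n) : Set (ZMod n) :=
  {q : ZMod n | ∃ i : ℕ, 1 ≤ i ∧ δa^[i] 0 = q}

/-- The orbit subgroup `K(𝒜)`: the subgroup of `(ZMod n, +)` generated by the orbit. -/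
def orbitSubgroup {n : ℕ} (δa : ZMod n → ZMod n) : AddSubgroup (ZMod n) :=
  AddSubgroup.closure (orbitSet δa)

/-! ### Words and images -/

theorem act_append {n : ℕ} (δa : ZMod n → ZMod n) (u v : List Letter) (q : ZMod n) :
    act δa (u ++ v) q = act δa v (act δa u q) := by
  induction u generalizing q with
  | nil => rfl
  | cons l u ih => cases l <;> exact ih _

theorem act_append_image {n : ℕ} (δa : ZMod n → ZMod n) (u v : List Letter) (R : Set (ZMod n)) :
    act δa (u ++ v) '' R = act δa v '' (act δa u '' R) := by
  rw [Set.image_image]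
  exact Set.image_congr fun x _ => act_append δa u v x

theorem act_replicate_b {n : ℕ} (δa : ZMod n → ZMod n) (k : ℕ) (q : ZMod n) :
    act δa (List.replicate k Letter.b) q = q + k := by
  induction k generalizing q with
  | zero => simp [act]
  | succ k ih =>
    rw [List.replicate_succ, act, ih]
    push_cast
    ring

/-- The image of the whole state set under any word is everything, or no larger than the
range of `δa`. -/
theorem ncard_act_image {n : ℕ} [NeZero n] (δa : ZMod n → ZMod n) (w : List Letter) :
    act δa w '' Set.univ = Set.univ ∨ (act δa w '' Set.univ).ncard ≤ (Set.range δa).ncard := by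
  induction w with
  | nil => left; simp [act]
  | cons l w ih =>
    cases l with
    | a =>
      right
      have : act δa (Letter.a :: w) '' Set.univ = act δa w '' Set.range δa := by
        rw [← Set.image_univ, Set.image_image]; rfl
      rw [this]
      exact Set.ncard_image_le (Set.toFinite _)
    | b =>
      have : act δa (Letter.b :: w) '' Set.univ = act δa w '' Set.univ := by
        have h : (fun x : ZMod n => x + 1) '' Set.univ = Set.univ :=
          Set.image_univ_of_surjective (add_right_surjective 1)
        conv_rhs => rw [← h, Set.image_image]
        rfl
      rw [this]
      exact ih

/-- The only state outside the range of `δa` is `0`, as otherwise no set of size `n - 1` would be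
reachable. -/
theorem exists_preimage {n : ℕ} [NeZero n] {δa : ZMod n → ZMod n}
    (hstd : Standardized δa) (hcr : CompletelyReachable δa) {p : ZMod n} (hp : p ≠ 0) :
    ∃ q, δa q = p := by
  obtain ⟨w, hw⟩ := hcr {0}ᶜ ⟨p, hp⟩
  rcases ncard_act_image δa w with h | h
  · rw [hw] at h
    have : (0 : ZMod n) ∈ ({0}ᶜ : Set (ZMod n)) := h ▸ Set.mem_univ _
    exact absurd rfl this
  · rw [hw] at h
    have hsub : Set.range δa ⊆ {0}ᶜ := by
      rintro _ ⟨q, rfl⟩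
      exact hstd.1 q
    have := Set.eq_of_subset_of_ncard_le hsub h (Set.toFinite _)
    have hp' : p ∈ Set.range δa := this ▸ hp
    exact hp'

/-- Pulling `T` back along the word `a b^k`, where `k ∉ T`. -/
theorem pullback {n : ℕ} [NeZero n] {δa : ZMod n → ZMod n}
    (hstd : Standardized δa) (hcr : CompletelyReachable δa) (T : Set (ZMod n)) (k : ℕ)
    (hk : (k : ZMod n) ∉ T) :
    act δa (Letter.a :: List.replicate k Letter.b) '' {y | δa y + k ∈ T} = T ∧
    T.ncard ≤ {y | δa y + k ∈ T}.ncard ∧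
    (δa 0 + k ∈ T → T.ncard < {y | δa y + k ∈ T}.ncard) := by
  have hact : ∀ y, act δa (Letter.a :: List.replicate k Letter.b) y = δa y + k := fun y => by
    rw [act, act_replicate_b]
  have himg : act δa (Letter.a :: List.replicate k Letter.b) '' {y | δa y + k ∈ T} = T := by
    ext t
    constructor
    · rintro ⟨y, hy, rfl⟩
      rw [hact]; exact hy
    · intro ht
      have hne : t - k ≠ 0 := fun h => hk (by rwa [← sub_eq_zero.1 h])
      obtain ⟨y, hy⟩ := exists_preimage hstd hcr hne
      have : δa y + k = t := by rw [hy]; ring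
      exact ⟨y, by rw [Set.mem_ofPred_eq, this]; exact ht, by rw [hact, this]⟩
  have hle : T.ncard ≤ {y | δa y + k ∈ T}.ncard := by
    conv_lhs => rw [← himg]
    exact Set.ncard_image_le (Set.toFinite _)
  refine ⟨himg, hle, fun h0 => lt_of_le_of_ne hle fun heq => ?_⟩
  have hinj := Set.injOn_of_ncard_image_eq ((congrArg Set.ncard himg).trans heq) (Set.toFinite _)
  -- two different `δa`-preimages of `δa 0` lie in the pulled back set
  obtain ⟨x, hx, y, hy, hxy⟩ :=
    Set.one_lt_ncard_iff_nontrivial.1 ((hstd.2 (δa 0)).2 rfl)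
  rw [Set.mem_ofPred_eq] at hx hy
  refine hxy (hinj ?_ ?_ ?_)
  · rw [Set.mem_ofPred_eq, hx]; exact h0
  · rw [Set.mem_ofPred_eq, hy]; exact h0
  · rw [hact, hact, hx, hy]

/-! ### Subgroups of `ZMod n` -/

/-- An element `q` of `K` can be moved within its coset modulo `H ≤ K` to a natural number which
is at most the index of `H` minus the index of `K`. -/
theorem exists_small_rep {n : ℕ} [NeZero n] {H K : AddSubgroup (ZMod n)} (hHK : H ≤ K)
    {q : ZMod n} (hq : q ∈ K) :
    ∃ k : ℕ, (k : ZMod n) - q ∈ H ∧ k + K.index ≤ H.index := by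
  have hKdvd : K.index ∣ q.val := by
    have h1 : Nat.card K • q = 0 := by
      have := card_nsmul_eq_zero' (x := (⟨q, hq⟩ : K))
      exact congrArg Subtype.val this
    have h2 : n ∣ Nat.card K * q.val := by
      rw [← ZMod.natCast_eq_zero_iff]
      simpa using h1
    have h3 : K.index * Nat.card K = n := by simpa using K.index_mul_card
    have h4 : Nat.card K * K.index ∣ Nat.card K * q.val := by rwa [mul_comm, h3]
    exact Nat.dvd_of_mul_dvd_mul_left Nat.card_pos h4
  have hdvd : K.index ∣ H.index := AddSubgroup.index_dvd_of_le hHK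
  have hpos : 0 < H.index := Nat.pos_of_ne_zero AddSubgroup.index_ne_zero_of_finite
  refine ⟨q.val % H.index, ?_, ?_⟩
  · have h1 : ((H.index : ℕ) : ZMod n) ∈ H := by
      simpa using H.nsmul_index_mem (1 : ZMod n)
    have h2 : ((q.val % H.index : ℕ) : ZMod n) - q
        = -((q.val / H.index) • ((H.index : ℕ) : ZMod n)) := by
      have h3 : ((q.val : ℕ) : ZMod n) = q := ZMod.natCast_zmod_val q
      have h4 := congrArg (Nat.cast : ℕ → ZMod n) (Nat.mod_add_div q.val H.index)
      rw [h3] at h4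
      push_cast at h4
      rw [nsmul_eq_mul]
      linear_combination h4
    rw [h2]
    exact H.neg_mem (H.nsmul_mem h1 _)
  · have h1 : K.index ∣ q.val % H.index := (Nat.dvd_mod_iff hdvd).2 hKdvd
    have h2 : q.val % H.index < H.index := Nat.mod_lt _ hpos
    have h3 : K.index ∣ H.index - q.val % H.index := Nat.dvd_sub hdvd h1
    have := Nat.le_of_dvd (by omega) h3
    omega

theorem card_dvd_ncard {n : ℕ} [NeZero n] (H : AddSubgroup (ZMod n)) (T : Set (ZMod n))
    (h : ∀ x ∈ H, ∀ q ∈ T, q + x ∈ T) : Nat.card H ∣ T.ncard := by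
  have hT : T = QuotientAddGroup.mk ⁻¹' ((QuotientAddGroup.mk : ZMod n → ZMod n ⧸ H) '' T) := by
    ext t
    constructor
    · exact fun ht => ⟨t, ht, rfl⟩
    · rintro ⟨s, hs, hst⟩
      have := h _ (QuotientAddGroup.eq.1 hst) s hs
      simpa using this
  rw [hT, ← Nat.card_coe_set_eq,
    Nat.card_congr (QuotientAddGroup.preimageMkEquivAddSubgroupProdSet H _), Nat.card_prod]
  exact dvd_mul_right _ _

/-- `T ∩ G` is a union of cosets of `H` (meaningful for `H ≤ G`), expressed through the complement
of `T`. -/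
def Per {n : ℕ} (G H : AddSubgroup (ZMod n)) (T : Set (ZMod n)) : Prop :=
  ∀ x ∈ H, ∀ q ∈ G, q ∉ T → q + x ∉ T

/-- Periodicity with respect to a generated subgroup can be tested on generators. -/
theorem per_closure {n : ℕ} [NeZero n] {G : AddSubgroup (ZMod n)} {A : Set (ZMod n)}
    {T : Set (ZMod n)} (hA : A ⊆ G) (h : ∀ x ∈ A, ∀ q ∈ G, q ∉ T → q + x ∉ T) :
    Per G (AddSubgroup.closure A) T := by
  intro x hx
  have hmem : ∀ y ∈ AddSubgroup.closure A, y ∈ G := fun y hy => (AddSubgroup.closure_le G).2 hA hy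
  induction hx using AddSubgroup.closure_induction with
  | mem x hx => exact h x hx
  | zero => intro q _ hq; simpa using hq
  | add x y hx hy ihx ihy =>
    intro q hqG hq
    rw [← add_assoc]
    exact ihy _ (G.add_mem hqG (hmem x hx)) (ihx q hqG hq)
  | neg x hx ih =>
    have hk : ∀ k : ℕ, ∀ q ∈ G, q ∉ T → q + k • x ∉ T := by
      intro k
      induction k with
      | zero => intro q _ hq; simpa using hq
      | succ k ihk =>
        intro q hqG hq
        rw [succ_nsmul, ← add_assoc]
        exact ih _ (G.add_mem hqG (G.nsmul_mem (hmem x hx) k)) (ihk q hqG hq)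
    -- in `ZMod n`, the element `-x` is the multiple `(n - 1) • x`
    have hneg : (n - 1) • x = -x := by
      have h1 : 1 ≤ n := NeZero.one_le
      rw [nsmul_eq_mul, Nat.cast_sub h1]
      simp
    intro q hqG hq
    rw [← hneg]
    exact hk _ q hqG hq

/-! ### The chain of subgroups -/

/-- The increasing chain of subgroups starting at `0`, in which each member is generated by its
predecessor and the image of its predecessor under `δa`. -/
def chain {n : ℕ} (δa : ZMod n → ZMod n) : ℕ → AddSubgroup (ZMod n)
  | 0 => ⊥
  | i + 1 => AddSubgroup.closure ((chain δa i : Set (ZMod n)) ∪ δa '' (chain δa i))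

theorem chain_le_succ {n : ℕ} (δa : ZMod n → ZMod n) (i : ℕ) :
    chain δa i ≤ chain δa (i + 1) := fun _ hx =>
  AddSubgroup.subset_closure (Or.inl hx)

theorem chain_mono {n : ℕ} (δa : ZMod n → ZMod n) : Monotone (chain δa) :=
  monotone_nat_of_le_succ (chain_le_succ δa)

theorem map_mem_chain_succ {n : ℕ} (δa : ZMod n → ZMod n) {i : ℕ} {x : ZMod n}
    (hx : x ∈ chain δa i) : δa x ∈ chain δa (i + 1) :=
  AddSubgroup.subset_closure (Or.inr ⟨x, hx, rfl⟩)

/-- If `δa` maps `G` into itself, then no word takes the whole state set to the complement of a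
coset of `G`: every set with such an image is again the complement of a coset. -/
theorem not_reach_compl_coset {n : ℕ} [NeZero n] {δa : ZMod n → ZMod n}
    (hstd : Standardized δa) (G : AddSubgroup (ZMod n))
    (hG : ∀ x ∈ G, δa x ∈ G) (w : List Letter) (R : Set (ZMod n)) (c : ZMod n)
    (h : act δa w '' R = {x | x - c ∉ G}) : ∃ c', R = {x | x - c' ∉ G} := by
  induction w generalizing R with
  | nil => exact ⟨c, by simpa [act] using h⟩
  | cons l w ih =>
    cases l with
    | b =>
      have h1 : act δa w '' ((fun x => x + 1) '' R) = {x | x - c ∉ G} := by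
        rw [Set.image_image, ← h]; rfl
      obtain ⟨c', hc'⟩ := ih _ h1
      refine ⟨c' - 1, ?_⟩
      ext x
      have h2 : x ∈ R ↔ x + 1 ∈ (fun x : ZMod n => x + 1) '' R := by simp
      rw [h2, hc']
      have h3 : x + 1 - c' = x - (c' - 1) := by ring
      simp only [Set.mem_ofPred_eq, h3]
    | a =>
      have h1 : act δa w '' (δa '' R) = {x | x - c ∉ G} := by
        rw [Set.image_image, ← h]; rfl
      obtain ⟨c', hc'⟩ := ih _ h1
      -- the image of `δa` misses `0`, so the coset is `G` itself
      have hc0 : c' ∈ G := by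
        by_contra hc0
        have : (0 : ZMod n) ∈ {x | x - c' ∉ G} := by
          simpa using hc0
        rw [← hc'] at this
        obtain ⟨x, _, hx⟩ := this
        exact hstd.1 x hx
      have hset : {x | x - c' ∉ G} = {x | x - 0 ∉ G} := by
        ext x
        simp only [Set.mem_ofPred_eq, sub_zero]
        rw [not_iff_not]
        exact ⟨fun hx => by simpa using G.add_mem hx hc0, fun hx => G.sub_mem hx hc0⟩
      rw [hset] at hc'
      refine ⟨0, Set.eq_of_subset_of_ncard_le ?_ ?_ (Set.toFinite _)⟩
      · intro x hx
        have : δa x ∈ {x | x - 0 ∉ G} := hc' ▸ ⟨x, hx, rfl⟩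
        simp only [Set.mem_ofPred_eq, sub_zero] at this ⊢
        exact fun hxG => this (hG x hxG)
      · rw [← hc']
        exact Set.ncard_image_le (Set.toFinite _)

theorem eq_top_of_invariant {n : ℕ} [NeZero n] {δa : ZMod n → ZMod n}
    (hstd : Standardized δa) (hcr : CompletelyReachable δa) (G : AddSubgroup (ZMod n))
    (hG : ∀ x ∈ G, δa x ∈ G) : G = ⊤ := by
  by_contra hne
  obtain ⟨p, hp⟩ : ∃ p, p ∉ G := by
    by_contra! hall
    exact hne ((AddSubgroup.eq_top_iff' G).2 hall)
  obtain ⟨w, hw⟩ := hcr {x | x - 0 ∉ G} ⟨p, by simpa using hp⟩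
  obtain ⟨c, hc⟩ := not_reach_compl_coset hstd G hG w _ _ hw
  have : c ∈ {x | x - c ∉ G} := hc ▸ Set.mem_univ c
  simp at this

theorem two_pow_le_card_chain {n : ℕ} [NeZero n] {δa : ZMod n → ZMod n}
    (hstd : Standardized δa) (hcr : CompletelyReachable δa) (j : ℕ)
    (hj : ∀ i < j, chain δa i ≠ ⊤) : 2 ^ j ≤ Nat.card (chain δa j) := by
  induction j with
  | zero => simpa using Nat.succ_le_of_lt (Nat.card_pos (α := chain δa 0))
  | succ j ih =>
    have ih' := ih fun i hi => hj i (by omega)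
    obtain ⟨c, hc⟩ := AddSubgroup.card_dvd_of_le (chain_le_succ δa j)
    have hpos : 0 < Nat.card (chain δa (j + 1)) := Nat.card_pos
    have hc0 : c ≠ 0 := by rintro rfl; simp [hc] at hpos
    have hc1 : c ≠ 1 := by
      rintro rfl
      have heq : chain δa j = chain δa (j + 1) :=
        AddSubgroup.eq_of_le_of_card_ge (chain_le_succ δa j) (by omega)
      refine hj j (by omega) (eq_top_of_invariant hstd hcr _ fun x hx => ?_)
      rw [heq]
      exact map_mem_chain_succ δa hx
    have hc2 : 2 ≤ c := by omega
    calc 2 ^ (j + 1) = 2 ^ j * 2 := pow_succ _ _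
      _ ≤ Nat.card (chain δa j) * c := Nat.mul_le_mul ih' hc2
      _ = _ := hc.symm

theorem exists_chain_eq_top {n : ℕ} [NeZero n] {δa : ZMod n → ZMod n}
    (hstd : Standardized δa) (hcr : CompletelyReachable δa) : ∃ M, chain δa M = ⊤ := by
  by_contra! h
  have h1 := two_pow_le_card_chain hstd hcr n fun i _ => h i
  have h2 : Nat.card (chain δa n) ≤ Nat.card (ZMod n) :=
    Nat.card_le_card_of_injective _ Subtype.val_injective
  rw [Nat.card_zmod] at h2
  exact absurd (h1.trans h2) (not_le.2 Nat.lt_two_pow_self)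

/-! ### Expanding a set -/

/-- The level of the chain at which periodicity of a set that cuts `chain δa j` breaks down. -/
theorem exists_break {n : ℕ} (δa : ZMod n → ZMod n) (j : ℕ) (T : Set (ZMod n))
    {p q : ZMod n} (hp : p ∈ chain δa j) (hpT : p ∈ T) (hq : q ∈ chain δa j) (hqT : q ∉ T) :
    ∃ i < j, Per (chain δa j) (chain δa i) T ∧ ¬ Per (chain δa j) (chain δa (i + 1)) T := by
  by_contra! hcon
  have hall : ∀ i ≤ j, Per (chain δa j) (chain δa i) T := by
    intro i
    induction i with
    | zero =>
      intro _ x hx r _ hr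
      have : x = 0 := hx
      simpa [this] using hr
    | succ i ih => exact fun hi => hcon i (by omega) (ih (by omega))
  have := hall j le_rfl (p - q) ((chain δa j).sub_mem hp hq) q hq hqT
  exact this (by simpa using hpT)

/-- If `T ∩ G_j` is a union of cosets of `G_i`, but not of `G_{i+1}`, then `T` is the image of a
larger set under a word of length at most `n + i + 1` minus the index of `G_j`. -/
theorem descend {n : ℕ} [NeZero n] {δa : ZMod n → ZMod n}
    (hstd : Standardized δa) (hcr : CompletelyReachable δa) (i : ℕ) :
    ∀ (j : ℕ) (T : Set (ZMod n)), i < j → Per (chain δa j) (chain δa i) T →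
      ¬ Per (chain δa j) (chain δa (i + 1)) T →
      ∃ (R : Set (ZMod n)) (w : List Letter), T.ncard < R.ncard ∧ act δa w '' R = T ∧
        w.length + (chain δa j).index ≤ n + i + 1 := by
  induction i using Nat.strong_induction_on with
  | _ i ih =>
  intro j T hij hper hnot
  have hsucc : chain δa (i + 1) ≤ chain δa j := chain_mono δa hij
  have hle : chain δa i ≤ chain δa j := chain_mono δa hij.le
  obtain ⟨y, hy, q, hqG, hqT, hqy⟩ :
      ∃ y ∈ chain δa i, ∃ q ∈ chain δa j, q ∉ T ∧ q + δa y ∈ T := by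
    by_contra! hcon
    refine hnot (per_closure ?_ ?_)
    · exact fun x hx => hsucc (AddSubgroup.subset_closure hx)
    · rintro x (hx | ⟨y, hy, rfl⟩) r hr hrT
      · exact hper x hx r hr hrT
      · exact hcon y hy r hr hrT
  have hyG : δa y ∈ chain δa j := hsucc (map_mem_chain_succ δa hy)
  obtain ⟨k, hk, hkidx⟩ := exists_small_rep hle hqG
  have hkT : (k : ZMod n) ∉ T := by
    have := hper _ hk q hqG hqT
    simpa using this
  have hkG : (k : ZMod n) ∈ chain δa j := by
    have := (chain δa j).add_mem (hle hk) hqG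
    simpa using this
  have hky : δa y + k ∈ T := by
    by_contra hcon
    have := hper _ ((chain δa i).neg_mem hk) _ ((chain δa j).add_mem hyG hkG) hcon
    apply this
    have h1 : δa y + k + -(k - q) = q + δa y := by ring
    rwa [h1]
  obtain ⟨himg, hcard, hgrow⟩ := pullback hstd hcr T k hkT
  have hidx : (chain δa i).index ≤ n := by
    have := (chain δa i).index_dvd_card
    rw [Nat.card_zmod] at this
    exact Nat.le_of_dvd (Nat.pos_of_ne_zero (NeZero.ne n)) this
  by_cases hlt : T.ncard < {y | δa y + k ∈ T}.ncard
  · refine ⟨_, _, hlt, himg, ?_⟩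
    simp only [List.length_cons, List.length_replicate]
    omega
  · -- the pulled back set contains `y` but not `0`, so it cuts `chain δa i`
    have h0 : (0 : ZMod n) ∉ {y | δa y + k ∈ T} := fun h => hlt (hgrow h)
    obtain ⟨i', hi', hper', hnot'⟩ :=
      exists_break δa i {y | δa y + k ∈ T} hy hky (chain δa i).zero_mem h0
    obtain ⟨R, w, hR, hw, hlen⟩ := ih i' hi' i _ hi' hper' hnot'
    refine ⟨R, w ++ (Letter.a :: List.replicate k Letter.b), hcard.trans_lt hR, ?_, ?_⟩
    · rw [act_append_image, hw, himg]
    · simp only [List.length_append, List.length_cons, List.length_replicate]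
      omega

/-! ### Summing up the word lengths -/

/-- The number of levels `1 ≤ j < M` of the chain whose order divides `t`; this bounds the excess
over `n` needed to expand a set of size `t`. -/
noncomputable def excess {n : ℕ} (δa : ZMod n → ZMod n) (M t : ℕ) : ℕ :=
  ((Finset.Ico 1 M).filter fun j => Nat.card (chain δa j) ∣ t).card

theorem sum_excess_le {n : ℕ} [NeZero n] {δa : ZMod n → ZMod n}
    (hstd : Standardized δa) (hcr : CompletelyReachable δa) {M : ℕ}
    (hM : ∀ i < M, chain δa i ≠ ⊤) {s : ℕ} (hs : 1 ≤ s) :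
    ∑ t ∈ Finset.Ico s n, excess δa M t ≤ n - 1 := by
  have hswap : ∑ t ∈ Finset.Ico s n, excess δa M t
      = ∑ j ∈ Finset.Ico 1 M,
        ((Finset.Ico s n).filter fun t => Nat.card (chain δa j) ∣ t).card := by
    simp only [excess, Finset.card_filter]
    exact Finset.sum_comm
  rw [hswap]
  calc _ ≤ ∑ j ∈ Finset.Ico 1 M, (n - 1) / 2 ^ j := by
        refine Finset.sum_le_sum fun j hj => ?_
        have hj' := Finset.mem_Ico.1 hj
        have h2 := two_pow_le_card_chain hstd hcr j fun i hi => hM i (by omega)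
        calc _ ≤ ((Finset.Ioc 0 (n - 1)).filter fun t => Nat.card (chain δa j) ∣ t).card := by
              refine Finset.card_le_card (Finset.filter_subset_filter _ fun t ht => ?_)
              rw [Finset.mem_Ico] at ht
              rw [Finset.mem_Ioc]
              omega
          _ = (n - 1) / Nat.card (chain δa j) := Nat.Ioc_filter_dvd_card_eq_div _ _
          _ ≤ (n - 1) / 2 ^ j := Nat.div_le_div_left h2 (by positivity)
    _ ≤ (n - 1) / (2 - 1) := Nat.geom_sum_Ico_le le_rfl _ _
    _ = n - 1 := by simp

theorem exists_reaching_word {n : ℕ} [NeZero n] {δa : ZMod n → ZMod n}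
    (hstd : Standardized δa) (hcr : CompletelyReachable δa) {M : ℕ} (hM : chain δa M = ⊤)
    (m : ℕ) : ∀ S : Set (ZMod n), S.Nonempty → n - S.ncard ≤ m →
      ∃ w : List Letter, act δa w '' Set.univ = S ∧
        w.length ≤ ∑ t ∈ Finset.Ico S.ncard n, (n + excess δa M t) := by
  induction m with
  | zero =>
    intro S _ hm
    have hS : S = Set.univ := by
      refine Set.eq_of_subset_of_ncard_le (Set.subset_univ _) ?_ (Set.toFinite _)
      rw [Set.ncard_univ, Nat.card_zmod]
      omega
    exact ⟨[], by simp [act, hS], by simp⟩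
  | succ m ih =>
    intro S hS hm
    by_cases hlt : n ≤ S.ncard
    · exact ih S hS (by omega)
    push Not at hlt
    obtain ⟨p, hp⟩ := hS
    obtain ⟨q, hq⟩ : ∃ q, q ∉ S := by
      by_contra! hall
      rw [Set.eq_univ_of_forall hall, Set.ncard_univ, Nat.card_zmod] at hlt
      omega
    have hmem : ∀ x, x ∈ chain δa M := fun x => hM ▸ AddSubgroup.mem_top x
    obtain ⟨i, hi, hper, hnot⟩ := exists_break δa M S (hmem p) hp (hmem q) hq
    obtain ⟨R, v, hR, hv, hlen⟩ := descend hstd hcr i M S hi hper hnot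
    rw [hM, AddSubgroup.index_top] at hlen
    -- `S` is a union of cosets of each of `chain δa 1, …, chain δa i`
    have hexc : i ≤ excess δa M S.ncard := by
      have hsub : Finset.Ico 1 (i + 1) ⊆
          (Finset.Ico 1 M).filter fun j => Nat.card (chain δa j) ∣ S.ncard := by
        intro j hj
        rw [Finset.mem_Ico] at hj
        rw [Finset.mem_filter, Finset.mem_Ico]
        refine ⟨by omega, card_dvd_ncard _ _ fun x hx r hr => ?_⟩
        by_contra hcon
        have hx' : x ∈ chain δa i := chain_mono δa (by omega : j ≤ i) hx
        exact hper _ ((chain δa i).neg_mem hx') _ (hmem _) hcon (by simpa using hr)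
      have := Finset.card_le_card hsub
      simpa [excess] using this
    have hRne : R.Nonempty := Set.nonempty_of_ncard_ne_zero (by omega)
    obtain ⟨u, hu, hulen⟩ := ih R hRne (by omega)
    refine ⟨u ++ v, by rw [act_append_image, hu, hv], ?_⟩
    rw [Finset.sum_eq_sum_Ico_succ_bot hlt, List.length_append]
    have hmono : ∑ t ∈ Finset.Ico R.ncard n, (n + excess δa M t)
        ≤ ∑ t ∈ Finset.Ico (S.ncard + 1) n, (n + excess δa M t) :=
      Finset.sum_le_sum_of_subset (Finset.Ico_subset_Ico_left hR)
    omega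

/-- In a standardized completely reachable binary circular DFA on `ZMod n`,
every nonempty subset `S` has a reaching word of length at most `n·(n − |S|) + n − 1`. -/
theorem stmt0 {n : ℕ} [NeZero n] (δa : ZMod n → ZMod n)
    (hstd : Standardized δa) (hcr : CompletelyReachable δa)
    (S : Set (ZMod n)) (hS : S.Nonempty) :
    ∃ w : List Letter, act δa w '' Set.univ = S ∧
      w.length ≤ n * (n - S.ncard) + n - 1 := by
  classical
  have hex := exists_chain_eq_top hstd hcr
  obtain ⟨w, hw, hlen⟩ := exists_reaching_word hstd hcr (Nat.find_spec hex) _ S hS le_rfl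
  refine ⟨w, hw, hlen.trans ?_⟩
  have hs : 1 ≤ S.ncard := (Set.ncard_pos (Set.toFinite _)).2 hS
  have hsum := sum_excess_le hstd hcr (fun i hi => Nat.find_min hex hi) hs
  rw [Finset.sum_add_distrib, Finset.sum_const, Nat.card_Ico, smul_eq_mul, mul_comm]
  have : 0 < n := Nat.pos_of_ne_zero (NeZero.ne n)
  omega
end

section
/- Let 𝒜 be a standardized completely reachable binary circular DFA on ℤ_n with orbit subgroup K. If |K| ≥ n/2, then 𝒜 fulfills Don's conjecture: every nonempty subset S ⊆ ℤ_n has a reaching word of length at most n·(n − |S|). -/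
namespace DonHalf

variable {n : ℕ}

/-! ### Periods and entering points -/

/-- `S` has a reaching word of length at most `c`. -/
def Reach (δa : ZMod n → ZMod n) (S : Set (ZMod n)) (c : ℕ) : Prop :=
  ∃ w : List Letter, act δa w '' Set.univ = S ∧ w.length ≤ c

/-- The group of periods of `S`: those `x` with `S + x = S`. -/
def period (S : Set (ZMod n)) : AddSubgroup (ZMod n) where
  carrier := {x | ∀ y, y ∈ S ↔ y + x ∈ S}
  zero_mem' := by simp
  add_mem' := by
    intro x z hx hz y
    rw [hx y, hz (y + x), add_assoc]
  neg_mem' := by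
    intro x hx y
    have := hx (y + -x)
    simpa using this.symm

theorem mem_period {S : Set (ZMod n)} {x : ZMod n} :
    x ∈ period S ↔ ∀ y, y ∈ S ↔ y + x ∈ S := Iff.rfl

/-- By finiteness, one inclusion `Sᶜ + x ⊆ Sᶜ` already makes `x` a period. -/
theorem mem_period_of_forall [NeZero n] {S : Set (ZMod n)} {x : ZMod n}
    (h : ∀ y, y ∉ S → y + x ∉ S) : x ∈ period S := by
  have hsub : (fun y => y + x) '' Sᶜ ⊆ Sᶜ := by
    rintro _ ⟨y, hy, rfl⟩
    exact h y hy
  have heq : (fun y => y + x) '' Sᶜ = Sᶜ := by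
    apply Set.eq_of_subset_of_ncard_le hsub
    rw [Set.ncard_image_of_injective _ (add_left_injective x)]
  intro y
  constructor
  · intro hy
    by_contra hyx
    obtain ⟨z, hz, hzx⟩ := heq.symm.subset hyx
    exact hz (add_right_cancel hzx ▸ hy)
  · intro hyx
    by_contra hy
    exact h y hy hyx

theorem exists_entry [NeZero n] {S : Set (ZMod n)} {x : ZMod n} (h : x ∉ period S) :
    ∃ y, y ∉ S ∧ y + x ∈ S := by
  by_contra! hc
  exact h (mem_period_of_forall hc)

/-- A `D`-periodic set is a union of cosets of `D`. -/
theorem card_dvd_ncard [NeZero n] {V : Set (ZMod n)} {D : AddSubgroup (ZMod n)}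
    (h : D ≤ period V) : Nat.card D ∣ V.ncard := by
  have hV : QuotientAddGroup.mk ⁻¹' ((QuotientAddGroup.mk : ZMod n → ZMod n ⧸ D) '' V) = V := by
    ext x
    constructor
    · rintro ⟨y, hy, hyx⟩
      have h1 := h (QuotientAddGroup.eq.1 hyx)
      have := (h1 y).1 hy
      simpa using this
    · intro hx
      exact ⟨x, hx, rfl⟩
  have := Nat.card_congr (QuotientAddGroup.preimageMkEquivAddSubgroupProdSet D
    ((QuotientAddGroup.mk : ZMod n → ZMod n ⧸ D) '' V))
  rw [hV, Nat.card_prod] at this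
  rw [← Nat.card_coe_set_eq, this]
  exact dvd_mul_right _ _

/-- If `c` is the only point outside `U` that translation by `d` moves into `U`, then `U` meets every
coset of `⟨d⟩` other than that of `c` fully or not at all, while it meets the coset of `c` properly.
So the order of `d` does not divide `|U|`. -/
theorem not_dvd_of_unique_entry [NeZero n] {U : Set (ZMod n)} {c d : ZMod n} (hc : c ∉ U)
    (hcd : c + d ∈ U) (huniq : ∀ y, y ≠ c → y ∉ U → y + d ∉ U) :
    ¬ Nat.card (AddSubgroup.zmultiples d) ∣ U.ncard := by
  intro hdvd
  set D := AddSubgroup.zmultiples d with hD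
  have hd : d ∈ D := AddSubgroup.mem_zmultiples d
  set C : Set (ZMod n) := {y | y - c ∈ D} with hC
  have hVd : D ≤ period (U ∪ C) := by
    rw [hD, AddSubgroup.zmultiples_le]
    apply mem_period_of_forall
    intro y hy
    simp only [Set.mem_union, hC, Set.mem_ofPred_eq, not_or] at hy ⊢
    refine ⟨huniq y ?_ hy.1, ?_⟩
    · rintro rfl
      exact hy.2 (by simp)
    · intro h
      exact hy.2 (by simpa [add_sub_right_comm] using D.sub_mem h hd)
  have h1 := card_dvd_ncard hVd
  have h2 : (C \ U).ncard + U.ncard = (U ∪ C).ncard := by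
    rw [Set.union_comm, ← Set.ncard_sdiff_add_ncard]
  have h3 : Nat.card D ∣ (C \ U).ncard := by
    rw [← h2] at h1
    exact (Nat.dvd_add_left hdvd).1 h1
  have h4 : C.ncard = Nat.card D := by
    have : C = (fun x => x + c) '' (D : Set (ZMod n)) := by
      ext y
      simp only [hC, Set.mem_ofPred_eq, Set.mem_image, SetLike.mem_coe]
      exact ⟨fun h => ⟨_, h, by simp⟩, by rintro ⟨x, hx, rfl⟩; simpa using hx⟩
    rw [this, Set.ncard_image_of_injective _ (add_left_injective c)]
    exact (Nat.card_coe_set_eq _).symm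
  have h5 : (C \ U).ncard < C.ncard := by
    apply Set.ncard_lt_ncard
    · refine ⟨Set.sdiff_subset, fun h => ?_⟩
      exact (h (show c + d ∈ C by simpa [hC] using hd)).2 hcd
    · exact Set.toFinite C
  have h6 : 0 < (C \ U).ncard := by
    rw [Set.ncard_pos]
    exact ⟨c, by simp [hC], hc⟩
  have := Nat.le_of_dvd h6 h3
  omega

/-! ### Short expanding words -/

theorem orbit_mem (δa : ZMod n → ZMod n) (j : ℕ) : δa^[j] 0 ∈ orbitSubgroup δa := by
  rcases Nat.eq_zero_or_pos j with rfl | hj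
  · exact zero_mem _
  · exact AddSubgroup.subset_closure ⟨j, hj, rfl⟩

/-- A set which is not `K`-periodic is expanded by a word `a^j b^y` with `(y + 1) j ≤ n`. Here `j` is
at most the order of the period group `H` of `S`, and `y + 1` at most the index of `H`, which is at
least two. -/
theorem exists_short_entry [NeZero n] {δa : ZMod n → ZMod n} {S : Set (ZMod n)}
    (hS : ¬ orbitSubgroup δa ≤ period S) :
    ∃ (j : ℕ) (y : ZMod n), 1 ≤ j ∧ (y.val + 1) * j ≤ n ∧ 2 * j ≤ n ∧
      y ∉ S ∧ y + δa^[j] 0 ∈ S := by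
  classical
  have hex : ∃ i, δa^[i] 0 ∉ period S := by
    by_contra! h
    apply hS
    rw [orbitSubgroup, AddSubgroup.closure_le]
    rintro _ ⟨i, -, rfl⟩
    exact h i
  obtain ⟨j, hj, hjmin⟩ : ∃ j, δa^[j] 0 ∉ period S ∧ ∀ i < j, δa^[i] 0 ∈ period S :=
    ⟨Nat.find hex, Nat.find_spec hex, fun i hi => not_not.1 (Nat.find_min hex hi)⟩
  have hj1 : 1 ≤ j := by
    rcases Nat.eq_zero_or_pos j with rfl | h
    · exact absurd (zero_mem _) hj
    · exact h
  -- a repetition before index `j` would make the whole orbit consist of periods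
  have hlt : ∀ i i', i < i' → i' < j → δa^[i] 0 ≠ δa^[i'] 0 := by
    intro i i' hii hij heq
    apply hj
    have : δa^[j] 0 = δa^[j - i' + i] 0 := by
      rw [Function.iterate_add_apply, heq, ← Function.iterate_add_apply]
      congr 2
      omega
    rw [this]
    exact hjmin _ (by omega)
  have hjcard : j ≤ Nat.card (period S) := by
    let f : Fin j → period S := fun i => ⟨δa^[i] 0, hjmin i i.2⟩
    have hf : Function.Injective f := by
      intro i i' h
      have h' : δa^[(i : ℕ)] 0 = δa^[(i' : ℕ)] 0 := congrArg Subtype.val h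
      rcases lt_trichotomy (i : ℕ) i' with h1 | h1 | h1
      · exact absurd h' (hlt _ _ h1 i'.2)
      · exact Fin.ext h1
      · exact absurd h'.symm (hlt _ _ h1 i.2)
    simpa using Nat.card_le_card_of_injective f hf
  obtain ⟨y₀, hy₀, hy₀'⟩ := exists_entry hj
  have hexk : ∃ k : ℕ, (k : ZMod n) ∉ S ∧ (k : ZMod n) + δa^[j] 0 ∈ S :=
    ⟨y₀.val, by simpa using hy₀, by simpa using hy₀'⟩
  obtain ⟨k, ⟨hk1, hk2⟩, hkmin⟩ : ∃ k : ℕ, ((k : ZMod n) ∉ S ∧ (k : ZMod n) + δa^[j] 0 ∈ S) ∧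
      ∀ i < k, ¬ ((i : ZMod n) ∉ S ∧ (i : ZMod n) + δa^[j] 0 ∈ S) :=
    ⟨Nat.find hexk, Nat.find_spec hexk, fun i hi => Nat.find_min hexk hi⟩
  have hne : ∀ i i' : ℕ, i < i' → i' ≤ k → -(i : ZMod n) + i' ∉ period S := by
    intro i i' hii hik hmem
    -- subtracting the period `i' - i` from `k` gives a smaller witness
    apply hkmin (k - (i' - i)) (by omega)
    have hcast : ((k - (i' - i) : ℕ) : ZMod n) + (-(i : ZMod n) + i') = k := by
      rw [Nat.cast_sub (by omega), Nat.cast_sub (by omega)]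
      ring
    constructor
    · rw [hmem, hcast]
      exact hk1
    · rw [hmem, add_right_comm, hcast]
      exact hk2
  have hkcard : k + 1 ≤ Nat.card (ZMod n ⧸ period S) := by
    let f : Fin (k + 1) → ZMod n ⧸ period S := fun i => ((i : ℕ) : ZMod n)
    have hf : Function.Injective f := by
      intro i i' h
      have h' : -((i : ℕ) : ZMod n) + (i' : ℕ) ∈ period S := QuotientAddGroup.eq.1 h
      rcases lt_trichotomy (i : ℕ) i' with h1 | h1 | h1
      · exact absurd h' (hne _ _ h1 (by omega))
      · exact Fin.ext h1
      · refine absurd ?_ (hne _ _ h1 (by omega))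
        have := neg_mem h'
        simpa [add_comm] using this
    simpa using Nat.card_le_card_of_injective f hf
  have hprod := AddSubgroup.card_eq_card_quotient_mul_card_addSubgroup (period S)
  rw [Nat.card_zmod] at hprod
  have hq2 : 2 ≤ Nat.card (ZMod n ⧸ period S) := by
    by_contra hlt2
    have h1 : Nat.card (ZMod n ⧸ period S) = 1 := by omega
    have : period S = ⊤ := AddSubgroup.index_eq_one.1 h1
    exact hj (this ▸ AddSubgroup.mem_top _)
  have hkj : (k + 1) * j ≤ n := by
    rw [hprod]
    exact Nat.mul_le_mul hkcard hjcard
  have hkn : k < n := by nlinarith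
  refine ⟨j, k, hj1, ?_, ?_, hk1, hk2⟩
  · rwa [ZMod.val_natCast_of_lt hkn]
  · rw [hprod]
    exact Nat.mul_le_mul hq2 hjcard

/-! ### Words and expansion -/

theorem act_append (δa : ZMod n → ZMod n) (u v : List Letter) (q : ZMod n) :
    act δa (u ++ v) q = act δa v (act δa u q) := by
  induction u generalizing q with
  | nil => rfl
  | cons x u ih => cases x <;> exact ih _

theorem act_replicate_a (δa : ZMod n → ZMod n) (j : ℕ) (q : ZMod n) :
    act δa (List.replicate j Letter.a) q = δa^[j] q := by
  induction j generalizing q with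
  | zero => rfl
  | succ j ih => exact ih _

theorem act_replicate_b (δa : ZMod n → ZMod n) (k : ℕ) (q : ZMod n) :
    act δa (List.replicate k Letter.b) q = q + k := by
  induction k generalizing q with
  | zero => simp [act]
  | succ k ih =>
    rw [List.replicate_succ, act, ih]
    push_cast
    ring

theorem Reach.mono {δa : ZMod n → ZMod n} {S : Set (ZMod n)} {c c' : ℕ} (h : Reach δa S c)
    (hc : c ≤ c') : Reach δa S c' := by
  obtain ⟨w, hw, hl⟩ := h
  exact ⟨w, hw, hl.trans hc⟩

theorem Reach.image {δa : ZMod n → ZMod n} {T : Set (ZMod n)} {c : ℕ} (h : Reach δa T c)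
    (u : List Letter) : Reach δa (act δa u '' T) (c + u.length) := by
  obtain ⟨w, rfl, hl⟩ := h
  refine ⟨w ++ u, ?_, by simpa using hl⟩
  rw [← Set.image_comp]
  congr 1
  ext q
  exact act_append δa w u q

/-- The preimage of `S` under `q ↦ δ_a^j(q) + y`, the action of the word `a^j b^y`. -/
def pre (δa : ZMod n → ZMod n) (j : ℕ) (y : ZMod n) (S : Set (ZMod n)) : Set (ZMod n) :=
  {q | δa^[j] q + y ∈ S}

/-- Every state other than `y` is the image of a nonzero state under `a^j b^y`, so a set avoiding `y`
is the image of the nonzero part of its preimage. -/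
theorem image_pre {δa : ZMod n → ZMod n} (hb : Set.BijOn δa {0}ᶜ {0}ᶜ) (j : ℕ) {y : ZMod n}
    {S : Set (ZMod n)} (hy : y ∉ S) :
    (fun q => δa^[j] q + y) '' (pre δa j y S \ {0}) = S := by
  ext s
  constructor
  · rintro ⟨q, hq, rfl⟩
    exact hq.1
  · intro hs
    have hne : s - y ∈ ({0}ᶜ : Set (ZMod n)) := by
      intro h
      exact hy (sub_eq_zero.1 h ▸ hs)
    obtain ⟨q, hq, hqs⟩ := (hb.iterate j).surjOn hne
    have hqs' : δa^[j] q + y = s := by rw [hqs]; ring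
    exact ⟨q, ⟨by simpa [pre, hqs'] using hs, hq⟩, hqs'⟩

theorem ncard_pre_diff {δa : ZMod n → ZMod n} (hb : Set.BijOn δa {0}ᶜ {0}ᶜ) (j : ℕ)
    {y : ZMod n} {S : Set (ZMod n)} (hy : y ∉ S) :
    (pre δa j y S \ {0}).ncard = S.ncard := by
  conv_rhs => rw [← image_pre hb j hy]
  symm
  apply Set.InjOn.ncard_image
  intro q hq q' hq' h
  exact (hb.iterate j).injOn hq.2 hq'.2 (add_right_cancel h)

theorem ncard_pre [NeZero n] {δa : ZMod n → ZMod n} (hb : Set.BijOn δa {0}ᶜ {0}ᶜ) (j : ℕ)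
    {y : ZMod n} {S : Set (ZMod n)} (hy : y ∉ S) (hyd : y + δa^[j] 0 ∈ S) :
    (pre δa j y S).ncard = S.ncard + 1 := by
  rw [← ncard_pre_diff hb j hy, Set.ncard_sdiff_singleton_add_one]
  simpa [pre, add_comm] using hyd

theorem reach_of_pre [NeZero n] {δa : ZMod n → ZMod n} (hb : Set.BijOn δa {0}ᶜ {0}ᶜ) (j : ℕ)
    {y : ZMod n} {S : Set (ZMod n)} (hy : y ∉ S) {c : ℕ} (h : Reach δa (pre δa j y S) c) :
    Reach δa S (c + (j + y.val)) := by
  have hact : act δa (List.replicate j Letter.a ++ List.replicate y.val Letter.b) =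
      fun q => δa^[j] q + y := by
    ext q
    rw [act_append, act_replicate_a, act_replicate_b, ZMod.natCast_zmod_val]
  have h1 := h.image (List.replicate j Letter.a ++ List.replicate y.val Letter.b)
  rw [hact] at h1
  have h2 : (fun q => δa^[j] q + y) '' pre δa j y S = S := by
    apply Set.Subset.antisymm
    · rintro _ ⟨q, hq, rfl⟩
      exact hq
    · conv_lhs => rw [← image_pre hb j hy]
      exact Set.image_mono Set.sdiff_subset
  rw [h2] at h1
  simpa using h1

theorem reach_univ (δa : ZMod n → ZMod n) (c : ℕ) : Reach δa Set.univ c :=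
  ⟨[], by ext; simp [act], by simp⟩

theorem ncard_le_n [NeZero n] (S : Set (ZMod n)) : S.ncard ≤ n := by
  have := Set.ncard_le_card S
  rwa [Nat.card_zmod] at this

theorem eq_univ_of_ncard [NeZero n] {S : Set (ZMod n)} (h : n ≤ S.ncard) : S = Set.univ := by
  apply Set.eq_of_subset_of_ncard_le (Set.subset_univ S)
  rwa [Set.ncard_univ, Nat.card_zmod]

theorem ncard_lt_n [NeZero n] {S : Set (ZMod n)} (h : S ≠ Set.univ) : S.ncard < n := by
  by_contra hc
  exact h (eq_univ_of_ncard (not_lt.1 hc))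

/-- Don's bound for `S` follows from Don's bound for the `K`-periodic proper subsets that are at least
as large as `S`. -/
theorem reach_of_periodic [NeZero n] {δa : ZMod n → ZMod n} (hb : Set.BijOn δa {0}ᶜ {0}ᶜ)
    (S : Set (ZMod n))
    (hper : ∀ U : Set (ZMod n), S.ncard ≤ U.ncard → U ≠ Set.univ →
      orbitSubgroup δa ≤ period U → Reach δa U (n * (n - U.ncard))) :
    Reach δa S (n * (n - S.ncard)) := by
  induction hm : n - S.ncard using Nat.strong_induction_on generalizing S with
  | _ m ih =>
    by_cases hu : S = Set.univ
    · subst hu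
      exact reach_univ _ _
    by_cases hp : orbitSubgroup δa ≤ period S
    · rw [← hm]
      exact hper S le_rfl hu hp
    obtain ⟨j, y, hj, hyj, -, hy, hyd⟩ := exists_short_entry hp
    have hc := ncard_pre hb j hy hyd
    have hlt := ncard_lt_n hu
    have h1 := ih (n - (pre δa j y S).ncard) (by omega) (pre δa j y S)
      (fun U hU => hper U (by omega)) rfl
    refine (reach_of_pre hb j hy h1).mono ?_
    have h2 : j + y.val ≤ n := by nlinarith
    have h3 : m = (n - (pre δa j y S).ncard) + 1 := by omega
    rw [h3, mul_add]
    omega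

theorem val_lt_of_ne [NeZero n] {y : ZMod n} (h : y ≠ -1) : y.val + 2 ≤ n := by
  have h1 := ZMod.val_lt y
  by_contra hc
  apply h
  have h2 : y.val + 1 = n := by omega
  have h3 : ((y.val + 1 : ℕ) : ZMod n) = 0 := by rw [h2]; simp
  push_cast at h3
  rw [ZMod.natCast_zmod_val] at h3
  exact eq_neg_of_add_eq_zero_left h3

theorem val_lt_of_ne_ne [NeZero n] {y : ZMod n} (h : y ≠ -1) (h' : y ≠ -2) :
    y.val + 3 ≤ n := by
  have h1 := val_lt_of_ne h
  by_contra hc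
  apply h'
  have h2 : y.val + 2 = n := by omega
  have h3 : ((y.val + 2 : ℕ) : ZMod n) = 0 := by rw [h2]; simp
  push_cast at h3
  rw [ZMod.natCast_zmod_val] at h3
  exact eq_neg_of_add_eq_zero_left h3

/-! ### The shape of `δ_a` -/

/-- The letter `a` permutes the nonzero states: it has rank `n - 1` because some word has the
nonzero states as its image, and `δ_a 0` also has a nonzero preimage. -/
theorem bijOn_of_standardized [NeZero n] {δa : ZMod n → ZMod n} (hstd : Standardized δa)
    (hcr : CompletelyReachable δa) : Set.BijOn δa {0}ᶜ {0}ᶜ := by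
  obtain ⟨h0, hdup⟩ := hstd
  have hd0 : δa 0 ≠ 0 := h0 0
  have hsub : Set.range δa ⊆ {0}ᶜ := by
    rintro _ ⟨q, rfl⟩
    exact h0 q
  -- a word whose image is a proper subset of the states contains the letter `a`
  have hrank : ∀ w : List Letter, act δa w '' Set.univ = Set.univ ∨
      (act δa w '' Set.univ).ncard ≤ (Set.range δa).ncard := by
    intro w
    induction w with
    | nil => left; ext; simp [act]
    | cons x w ih =>
      cases x with
      | a =>
        right
        have : act δa (Letter.a :: w) '' Set.univ = act δa w '' Set.range δa := by
          rw [← Set.image_univ, ← Set.image_comp]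
          rfl
        rw [this]
        exact Set.ncard_image_le
      | b =>
        have : act δa (Letter.b :: w) '' Set.univ = act δa w '' Set.univ := by
          conv_rhs => rw [← Set.image_univ_of_surjective (add_right_surjective (1 : ZMod n)),
            ← Set.image_comp]
          rfl
        rw [this]
        exact ih
  obtain ⟨w, hw⟩ := hcr {0}ᶜ ⟨δa 0, hd0⟩
  have hrange : Set.range δa = {0}ᶜ := by
    apply Set.eq_of_subset_of_ncard_le hsub
    rcases hrank w with h | h
    · rw [hw] at h
      exact absurd (h ▸ Set.mem_univ (0 : ZMod n)) (by simp)
    · rwa [hw] at h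
  have hsurj : Set.SurjOn δa {0}ᶜ {0}ᶜ := by
    intro p hp
    rw [← hrange] at hp
    obtain ⟨q, rfl⟩ := hp
    by_cases hq : q = 0
    · subst hq
      have := (hdup (δa 0)).2 rfl
      obtain ⟨x, hx, hx0⟩ := Set.exists_ne_of_one_lt_ncard this 0
      exact ⟨x, hx0, hx⟩
    · exact ⟨q, hq, rfl⟩
  have hmaps : Set.MapsTo δa {0}ᶜ {0}ᶜ := fun q _ => h0 q
  exact ⟨hmaps, Set.injOn_of_ncard_image_eq (by rw [hsurj.image_eq_of_mapsTo hmaps]), hsurj⟩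

/-! ### Saving one letter above half size -/

section Slack

variable [NeZero n] {δa : ZMod n → ZMod n}

/-- Above half size, either one letter can be saved against Don's bound, or the only expansion
available with `j = 1` is the longest one, at `-1`. -/
theorem reach_or_unique (hb : Set.BijOn δa {0}ᶜ {0}ᶜ)
    (hbig : ∀ U : Set (ZMod n), n < 2 * U.ncard → U ≠ Set.univ → ¬ orbitSubgroup δa ≤ period U)
    (hreach : ∀ U : Set (ZMod n), n < 2 * U.ncard → Reach δa U (n * (n - U.ncard)))
    {U : Set (ZMod n)} (hU : n < 2 * U.ncard) (hne : U ≠ Set.univ) :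
    Reach δa U (n * (n - U.ncard) - 1) ∨
      (-1 ∉ U ∧ -1 + δa 0 ∈ U ∧ ∀ y, y ≠ -1 → y ∉ U → y + δa 0 ∉ U) := by
  have hlt := ncard_lt_n hne
  have key : ∀ (j : ℕ) (y : ZMod n), y ∉ U → y + δa^[j] 0 ∈ U → j + y.val + 1 ≤ n →
      Reach δa U (n * (n - U.ncard) - 1) := by
    intro j y hy hyd hle
    have hc := ncard_pre hb j hy hyd
    refine (reach_of_pre hb j hy (hreach _ (by omega))).mono ?_
    have h3 : n - U.ncard = (n - (pre δa j y U).ncard) + 1 := by omega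
    rw [h3, mul_add]
    omega
  by_cases hd : δa 0 ∈ period U
  · left
    obtain ⟨j, y, hj, hyj, h2j, hy, hyd⟩ := exists_short_entry (hbig U hU hne)
    refine key j y hy hyd ?_
    have hj2 : 2 ≤ j := by
      by_contra hj2
      obtain rfl : j = 1 := by omega
      exact hy ((hd y).2 hyd)
    rcases Nat.eq_zero_or_pos y.val with h | h
    · omega
    · nlinarith
  · by_cases hex : ∃ y, y ≠ -1 ∧ y ∉ U ∧ y + δa 0 ∈ U
    · left
      obtain ⟨y, hy1, hy, hyd⟩ := hex
      have := val_lt_of_ne hy1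
      exact key 1 y hy hyd (by omega)
    · right
      push Not at hex
      obtain ⟨y, hy, hyd⟩ := exists_entry hd
      have hy1 : y = -1 := by
        by_contra h
        exact hex y h hy hyd
      subst hy1
      exact ⟨hy, hyd, hex⟩

/-- A letter is saved against Don's bound if some multiple `m < n` of the order of `δ_a 0` is at least
`|U|`: the size of the set cannot pass through `m` without a saving. -/
theorem reach_slack (hb : Set.BijOn δa {0}ᶜ {0}ᶜ)
    (hbig : ∀ U : Set (ZMod n), n < 2 * U.ncard → U ≠ Set.univ → ¬ orbitSubgroup δa ≤ period U)
    (hreach : ∀ U : Set (ZMod n), n < 2 * U.ncard → Reach δa U (n * (n - U.ncard)))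
    {m : ℕ} (hm : m < n) (he : Nat.card (AddSubgroup.zmultiples (δa 0)) ∣ m)
    (U : Set (ZMod n)) (hU : n < 2 * U.ncard) (hUm : U.ncard ≤ m) :
    Reach δa U (n * (n - U.ncard) - 1) := by
  induction hk : m - U.ncard generalizing U with
  | zero =>
    have hne : U ≠ Set.univ := by
      rintro rfl
      rw [Set.ncard_univ, Nat.card_zmod] at hUm
      omega
    rcases reach_or_unique hb hbig hreach hU hne with h | ⟨h1, h2, h3⟩
    · exact h
    · have : U.ncard = m := by omega
      exact absurd (this ▸ he) (not_dvd_of_unique_entry h1 h2 h3)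
  | succ k ih =>
    have hne : U ≠ Set.univ := by
      rintro rfl
      rw [Set.ncard_univ, Nat.card_zmod] at hUm
      omega
    rcases reach_or_unique hb hbig hreach hU hne with h | ⟨h1, h2, h3⟩
    · exact h
    · have hc := ncard_pre hb 1 h1 h2
      refine (reach_of_pre hb 1 h1 (ih _ (by omega) (by omega) (by omega))).mono ?_
      have h4 : n - U.ncard = (n - (pre δa 1 (-1) U).ncard) + 1 := by omega
      have h5 := ZMod.val_lt (-1 : ZMod n)
      have h6 : 0 < n * (n - (pre δa 1 (-1) U).ncard) := Nat.mul_pos (by omega) (by omega)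
      rw [h4, mul_add]
      omega

/-- If `d` generates `K`, then a set containing `0` with all entering points under `+ d` outside `K`
contains all of `K`. -/
theorem subset_of_unique {U : Set (ZMod n)} {d : ZMod n} {K : AddSubgroup (ZMod n)}
    (hK : AddSubgroup.zmultiples d = K) (h1 : -1 ∉ K) (h0 : 0 ∈ U)
    (huniq : ∀ y, y ≠ -1 → y ∉ U → y + d ∉ U) : ∀ x ∈ K, x ∈ U := by
  have hd : d ∈ K := hK ▸ AddSubgroup.mem_zmultiples d
  have hper : K ≤ period (U ∪ (K : Set (ZMod n))ᶜ) := by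
    rw [← hK, AddSubgroup.zmultiples_le, hK]
    apply mem_period_of_forall
    intro y hy
    simp only [Set.mem_union, Set.mem_compl_iff, SetLike.mem_coe, not_or, not_not] at hy ⊢
    refine ⟨huniq y ?_ hy.1, K.add_mem hy.2 hd⟩
    rintro rfl
    exact h1 hy.2
  intro x hx
  have := (hper hx 0).1 (Or.inl h0)
  rw [zero_add] at this
  rcases this with h | h
  · exact h
  · exact absurd hx h

end Slack

/-! ### The exceptional case `n = 6` -/

/-- The exceptional case `n = 6`, where `T = {1, 2, 3}` and `δ_a 0 = 4`. Expanding `T` by `a b^5`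
leads to a set that has an expansion of length at most `3`. -/
theorem reach_six {δa : ZMod 6 → ZMod 6} (hb : Set.BijOn δa {0}ᶜ {0}ᶜ)
    (hreach : ∀ U : Set (ZMod 6), 6 < 2 * U.ncard → Reach δa U (6 * (6 - U.ncard)))
    {T : Set (ZMod 6)} (hT : T.ncard = 3) (h0 : δa 0 = 4) (h4 : δa 4 = 4) (h5 : δa 5 = 2)
    (hT0 : 0 ∉ T) (hT4 : 4 ∉ T) (hT5 : 5 ∉ T) : Reach δa T 16 := by
  have hTeq : T = {1, 2, 3} := by
    apply Set.eq_of_subset_of_ncard_le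
    · intro x hx
      have hx0 : x ≠ 0 := fun h => hT0 (h ▸ hx)
      have hx4 : x ≠ 4 := fun h => hT4 (h ▸ hx)
      have hx5 : x ≠ 5 := fun h => hT5 (h ▸ hx)
      have : ∀ x : ZMod 6, x ≠ 0 → x ≠ 4 → x ≠ 5 → x = 1 ∨ x = 2 ∨ x = 3 := by decide
      simpa using this x hx0 hx4 hx5
    · rw [hT]
      refine (Set.ncard_insert_le _ _).trans ?_
      rw [Set.ncard_pair (by decide)]
    · exact Set.toFinite _
  have m1 : (1 : ZMod 6) ∈ T := by simp [hTeq]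
  have m3 : (3 : ZMod 6) ∈ T := by simp [hTeq]
  have e1 : (4 : ZMod 6) + 5 = 3 := by decide
  have e2 : (5 : ZMod 6) + 4 = 3 := by decide
  have e3 : (2 : ZMod 6) + 5 = 1 := by decide
  have e4 : (2 : ZMod 6) + 4 = 0 := by decide
  have e5 : (1 : ZMod 6) + 4 = 5 := by decide
  have hc := ncard_pre hb 1 hT5 (by simpa [h0, e2] using m3)
  set T' := pre δa 1 5 T with hT'
  have p0 : 0 ∈ T' := by simpa [hT', pre, h0, e1] using m3
  have p4 : 4 ∈ T' := by simpa [hT', pre, h4, e1] using m3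
  have p5 : 5 ∈ T' := by simpa [hT', pre, h5, e3] using m1
  have hr : Reach δa T' 10 := by
    by_cases p2 : 2 ∈ T'
    · have p1 : 1 ∉ T' := by
        intro p1
        have hsub : ({0, 1, 2, 4, 5} : Set (ZMod 6)) ⊆ T' := by
          intro x hx
          simp only [Set.mem_insert_iff, Set.mem_singleton_iff] at hx
          rcases hx with rfl | rfl | rfl | rfl | rfl <;> assumption
        have h1 := Set.ncard_le_ncard hsub
        have h2 : ({0, 1, 2, 4, 5} : Set (ZMod 6)).ncard = 5 := by
          have : ({0, 1, 2, 4, 5} : Set (ZMod 6)) =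
            (({0, 1, 2, 4, 5} : Finset (ZMod 6)) : Set (ZMod 6)) := by simp
          rw [this, Set.ncard_coe_finset]
          decide
        omega
      have hc2 := ncard_pre hb 1 p1 (by simpa [h0, e5] using p5)
      refine (reach_of_pre hb 1 p1 (hreach _ (by omega))).mono ?_
      have : (1 : ZMod 6).val = 1 := by decide
      omega
    · have hc2 := ncard_pre hb 1 p2 (by simpa [h0, e4] using p0)
      refine (reach_of_pre hb 1 p2 (hreach _ (by omega))).mono ?_
      have : (2 : ZMod 6).val = 2 := by decide
      omega
  refine (reach_of_pre hb 1 hT5 hr).mono ?_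
  have : (5 : ZMod 6).val = 5 := by decide
  omega

/-! ### Orbit subgroup of index two -/

section Half

variable [NeZero n] {δa : ZMod n → ZMod n}

/-- With `K` of index two and `T = δ_a⁻¹(Kᶜ)` not `K`-periodic, two letters are saved against Don's
bound when reaching `T`. -/
theorem reach_pre_coset (hb : Set.BijOn δa {0}ᶜ {0}ᶜ)
    (hbig : ∀ U : Set (ZMod n), n < 2 * U.ncard → U ≠ Set.univ → ¬ orbitSubgroup δa ≤ period U)
    (hreach : ∀ U : Set (ZMod n), n < 2 * U.ncard → Reach δa U (n * (n - U.ncard)))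
    (hd0 : δa 0 ≠ 0)
    {N : ℕ} (hN : Nat.card (orbitSubgroup δa) = N) (hn : n = 2 * N) (hN3 : 3 ≤ N)
    (h1K : -1 ∉ orbitSubgroup δa)
    {T : Set (ZMod n)} (hT : ∀ x, x ∈ T ↔ δa x ∉ orbitSubgroup δa) (hTN : T.ncard = N)
    (hTper : ¬ orbitSubgroup δa ≤ period T) : Reach δa T (n * N - 2) := by
  set K := orbitSubgroup δa with hKdef
  have hdK : δa 0 ∈ K := orbit_mem δa 1
  have hddK : δa (δa 0) ∈ K := orbit_mem δa 2
  have hDK : AddSubgroup.zmultiples (δa 0) ≤ K := by rwa [AddSubgroup.zmultiples_le]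
  have hdvd : Nat.card (AddSubgroup.zmultiples (δa 0)) ∣ N := by
    rw [← hN]
    exact AddSubgroup.card_dvd_of_le hDK
  have hT0 : 0 ∉ T := fun h => (hT 0).1 h hdK
  have hTd : δa 0 ∉ T := fun h => (hT _).1 h hddK
  have hnN : n * N = n * (N - 1) + n := by
    obtain ⟨M, rfl⟩ : ∃ M, N = M + 1 := ⟨N - 1, by omega⟩
    simp [mul_add]
  have key : ∀ (j : ℕ) (y : ZMod n), y ∉ T → y + δa^[j] 0 ∈ T → j + y.val + 2 ≤ n →
      Reach δa T (n * N - 2) := by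
    intro j y hy hyd hle
    have hc := ncard_pre hb j hy hyd
    refine (reach_of_pre hb j hy (hreach _ (by omega))).mono ?_
    have h3 : n - (pre δa j y T).ncard = N - 1 := by omega
    rw [h3]
    omega
  by_cases hd : δa 0 ∈ period T
  · obtain ⟨j, y, hj, hyj, h2j, hy, hyd⟩ := exists_short_entry hTper
    refine key j y hy hyd ?_
    have hj2 : 2 ≤ j := by
      by_contra hj2
      obtain rfl : j = 1 := by omega
      exact hy ((hd y).2 hyd)
    obtain h | h | h : y.val = 0 ∨ y.val = 1 ∨ 2 ≤ y.val := by omega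
    · omega
    · omega
    · nlinarith
  by_cases hex : ∃ y, y ≠ -1 ∧ y ≠ -2 ∧ y ∉ T ∧ y + δa 0 ∈ T
  · obtain ⟨y, hy1, hy2, hy, hyd⟩ := hex
    have := val_lt_of_ne_ne hy1 hy2
    exact key 1 y hy hyd (by omega)
  push Not at hex
  obtain ⟨z, hz, hzd⟩ := exists_entry hd
  -- `|T| = N` is divisible by the order of `d`, so neither entering point can occur alone
  have hz12 : z = -1 ∨ z = -2 := by
    by_contra! h
    exact hex z h.1 h.2 hz hzd
  have hone : -1 ∉ T ∧ -1 + δa 0 ∈ T := by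
    by_contra hcon
    have hz2 : z = -2 := hz12.resolve_left (fun h => hcon (h ▸ ⟨hz, hzd⟩))
    subst hz2
    refine not_dvd_of_unique_entry hz hzd ?_ (hTN ▸ hdvd)
    intro y hy2 hy hyd
    by_cases hy1 : y = -1
    · exact hcon (hy1 ▸ ⟨hy, hyd⟩)
    · exact hex y hy1 hy2 hy hyd
  have htwo : -2 ∉ T ∧ -2 + δa 0 ∈ T := by
    by_contra hcon
    have hz2 : z = -1 := hz12.resolve_right (fun h => hcon (h ▸ ⟨hz, hzd⟩))
    subst hz2
    refine not_dvd_of_unique_entry hz hzd ?_ (hTN ▸ hdvd)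
    intro y hy1 hy hyd
    by_cases hy2 : y = -2
    · exact hcon (hy2 ▸ ⟨hy, hyd⟩)
    · exact hex y hy1 hy2 hy hyd
  have hnum : ∀ k : ℕ, 0 < k → k < n → (k : ZMod n) ≠ 0 := by
    intro k hk hkn h
    have := Nat.le_of_dvd hk ((ZMod.natCast_eq_zero_iff k n).1 h)
    omega
  have h1ne : (1 : ZMod n) ≠ 0 := by simpa using hnum 1 (by omega) (by omega)
  have h2ne : (2 : ZMod n) ≠ 0 := by simpa using hnum 2 (by omega) (by omega)
  have h4ne : (4 : ZMod n) ≠ 0 := by simpa using hnum 4 (by omega) (by omega)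
  have h21 : (-2 : ZMod n) ≠ -1 := by
    intro h
    apply h1ne
    linear_combination -h
  have hv := val_lt_of_ne h21
  have hc1 := ncard_pre hb 1 htwo.1 htwo.2
  set T₁ := pre δa 1 (-2) T with hT₁
  suffices h : Reach δa T₁ (n * (N - 1) - 1) ∨ Reach δa T (n * N - 2) by
    rcases h with h | h
    · refine (reach_of_pre hb 1 htwo.1 h).mono ?_
      have : 0 < n * (N - 1) := Nat.mul_pos (by omega) (by omega)
      omega
    · exact h
  have hT₁u : T₁ ≠ Set.univ := by
    intro h
    rw [h, Set.ncard_univ, Nat.card_zmod] at hc1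
    omega
  have hsub1 : n - T₁.ncard = N - 1 := by omega
  have hNpos : 0 < Nat.card (AddSubgroup.zmultiples (δa 0)) := Nat.card_pos
  by_cases hDN : Nat.card (AddSubgroup.zmultiples (δa 0)) = N
  swap
  · left
    obtain ⟨c, hc⟩ := hdvd
    have hc2 : 2 ≤ c := by
      by_contra hc2
      obtain rfl | rfl : c = 0 ∨ c = 1 := by omega
      · omega
      · omega
    have hlt : Nat.card (AddSubgroup.zmultiples (δa 0)) * 2 ≤ N := by
      conv_rhs => rw [hc]
      exact Nat.mul_le_mul_left _ hc2
    rw [← hsub1]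
    refine reach_slack hb hbig hreach (m := N + Nat.card (AddSubgroup.zmultiples (δa 0)))
      (by omega) ?_ T₁ (by omega) (by omega)
    exact (Nat.dvd_add_left (dvd_refl _)).2 ⟨c, hc⟩
  have hDeq : AddSubgroup.zmultiples (δa 0) = K :=
    AddSubgroup.eq_of_le_of_card_ge hDK (by omega)
  rcases reach_or_unique hb hbig hreach (U := T₁) (by omega) hT₁u with h | ⟨u1, u2, u3⟩
  · left
    rwa [hsub1] at h
  have hc2 := ncard_pre hb 1 u1 u2
  set T₂ := pre δa 1 (-1) T₁ with hT₂
  have hT₂u : T₂ ≠ Set.univ := by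
    intro h
    rw [h, Set.ncard_univ, Nat.card_zmod] at hc2
    omega
  rcases reach_or_unique hb hbig hreach (U := T₂) (by omega) hT₂u with h | ⟨-, -, v3⟩
  · left
    refine (reach_of_pre hb 1 u1 h).mono ?_
    have h4 : N - 1 = (n - T₂.ncard) + 1 := by omega
    have h5 := ZMod.val_lt (-1 : ZMod n)
    have h6 : 0 < n * (n - T₂.ncard) := Nat.mul_pos (by omega) (by omega)
    rw [h4, mul_add]
    omega
  right
  have hmem1 : ∀ x, x ∈ T₁ ↔ δa x + -2 ∈ T := fun x => Iff.rfl
  have hmem2 : ∀ x, x ∈ T₂ ↔ δa x + -1 ∈ T₁ := fun x => Iff.rfl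
  have hK1 := subset_of_unique hDeq h1K ((hmem1 0).2 (by rw [add_comm]; exact htwo.2)) u3
  have hK2 := subset_of_unique hDeq h1K ((hmem2 0).2 (by rw [add_comm]; exact u2)) v3
  have hnotK : -1 + δa 0 ∉ K := fun h => h1K (by simpa using K.sub_mem h hdK)
  have hT₁eq : insert (-1 + δa 0) (K : Set (ZMod n)) = T₁ := by
    apply Set.eq_of_subset_of_ncard_le
    · rintro x (rfl | hx)
      · exact u2
      · exact hK1 x hx
    · rw [Set.ncard_insert_of_notMem hnotK, hc1, hTN, ← hN]
      exact Nat.succ_le_succ (Nat.card_coe_set_eq (K : Set (ZMod n))).le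
    · exact Set.toFinite T₁
  have hT₁mem : ∀ x ∈ T₁, x = -1 + δa 0 ∨ x ∈ K := by
    intro x hx
    rw [← hT₁eq] at hx
    exact hx
  -- `K ⊆ T₂` means `δ_a(K) ⊆ T₁ + 1 = Kᶜ ∪ {d}`
  have hKimg : ∀ x ∈ K, δa x ∈ K → δa x = δa 0 := by
    intro x hx hax
    rcases hT₁mem _ ((hmem2 x).1 (hK2 x hx)) with h | h
    · linear_combination h
    · exact absurd (by simpa using K.sub_mem h hax) h1K
  have hfix : δa (δa 0) = δa 0 := hKimg _ hdK hddK
  have hinj : ∀ x, x ≠ 0 → δa x = δa 0 → x = δa 0 := fun x hx h =>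
    hb.injOn hx hd0 (h.trans hfix.symm)
  have hKT : ∀ x ∈ K, x ≠ 0 → x ≠ δa 0 → x ∈ T := by
    intro x hx hx0 hxd
    rw [hT]
    exact fun h => hxd (hinj x hx0 (hKimg x hx h))
  have h2K : (2 : ZMod n) ∈ K := by
    by_contra h2
    have hind : K.index = 2 := by
      have := K.card_mul_index
      rw [Nat.card_zmod, hN] at this
      exact Nat.eq_of_mul_eq_mul_left (by omega) (this.trans (hn.trans (mul_comm _ _)))
    apply h2
    have : (2 : ZMod n) = -(-1 + -1) := by ring
    rw [this, neg_mem_iff, AddSubgroup.add_mem_iff_of_index_two hind]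
  -- `T` contains all of `K` but `0` and `d`, and `-2 ∈ K` is missing from `T`
  have hd2 : δa 0 = -2 := by
    by_contra h
    exact htwo.1 (hKT (-2) (K.neg_mem h2K) (neg_ne_zero.2 h2ne) (Ne.symm h))
  have h4K : (4 : ZMod n) ∈ K := by
    have : (4 : ZMod n) = 2 + 2 := by ring
    rw [this]
    exact K.add_mem h2K h2K
  -- the nonzero preimage of `4` lies in `T₁ = K ∪ {-1 + d}`, which fails unless `4 = d`
  have h42 : (4 : ZMod n) = -2 := by
    by_contra h42
    obtain ⟨x, hx0, hx⟩ := hb.surjOn (show (4 : ZMod n) ∈ ({0}ᶜ : Set (ZMod n)) from h4ne)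
    have hx1 : x ∈ T₁ := by
      rw [hmem1, hx]
      have : (4 : ZMod n) + -2 = 2 := by ring
      rw [this]
      refine hKT 2 h2K h2ne ?_
      rw [hd2]
      intro h
      apply h4ne
      linear_combination h
    rcases hT₁mem x hx1 with h | h
    · have := (hT _).1 hone.2
      rw [← h, hx] at this
      exact this h4K
    · apply h42
      rw [← hd2, ← hx]
      exact hKimg x h (hx ▸ h4K)
  have hn6 : n = 6 := by
    have h6 : ((6 : ℕ) : ZMod n) = 0 := by
      push_cast
      linear_combination h42
    have := Nat.le_of_dvd (by norm_num) ((ZMod.natCast_eq_zero_iff 6 n).1 h6)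
    omega
  subst hn6
  obtain rfl : N = 3 := by omega
  rw [← h42] at hd2
  have e5 : (-1 : ZMod 6) = 5 := by decide
  rw [hd2] at hfix hTd
  rw [e5] at hone
  refine reach_six hb hreach hTN hd2 hfix ?_ hT0 hTd hone.1
  have h5K : δa 5 ∈ K := by
    by_contra h
    exact hone.1 ((hT 5).2 h)
  have h50 : δa 5 ≠ 0 := hb.mapsTo (show (5 : ZMod 6) ∈ ({0}ᶜ : Set (ZMod 6)) by decide)
  have h54 : δa 5 ≠ 4 := by
    intro h
    have := hinj 5 (by decide) (h.trans hd2.symm)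
    rw [hd2] at this
    exact absurd this (by decide)
  rw [← hDeq, hd2, AddSubgroup.mem_zmultiples_iff] at h5K
  obtain ⟨k, hk⟩ := h5K
  rw [zsmul_eq_mul] at hk
  have : ∀ c x : ZMod 6, c * 4 = x → x ≠ 0 → x ≠ 4 → x = 2 := by decide
  exact this _ _ hk h50 h54

/-- Don's bound for the `K`-periodic sets, that is for `K` and `Kᶜ`, when `K` has index two. -/
theorem reach_coset (hb : Set.BijOn δa {0}ᶜ {0}ᶜ) (hcr : CompletelyReachable δa)
    (hd0 : δa 0 ≠ 0) {N : ℕ} (hN : Nat.card (orbitSubgroup δa) = N) (hn : n = 2 * N)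
    {S : Set (ZMod n)} (hS : S.Nonempty) (hSu : S ≠ Set.univ)
    (hSper : orbitSubgroup δa ≤ period S) : Reach δa S (n * (n - S.ncard)) := by
  set K := orbitSubgroup δa with hKdef
  have hdK : δa 0 ∈ K := orbit_mem δa 1
  have hddK : δa (δa 0) ∈ K := orbit_mem δa 2
  have hNpos : 0 < N := hN ▸ Nat.card_pos
  have hKcard : (K : Set (ZMod n)).ncard = N := by
    rw [← hN]
    exact (Nat.card_coe_set_eq (K : Set (ZMod n))).symm
  have hKccard : ((K : Set (ZMod n))ᶜ).ncard = N := by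
    have := Set.ncard_add_ncard_compl (K : Set (ZMod n))
    rw [Nat.card_zmod] at this
    omega
  have hind : K.index = 2 := by
    have := K.card_mul_index
    rw [Nat.card_zmod, hN] at this
    exact Nat.eq_of_mul_eq_mul_left hNpos (this.trans (hn.trans (mul_comm _ _)))
  have hdvd : ∀ U : Set (ZMod n), K ≤ period U → U ≠ Set.univ → U.ncard = 0 ∨ U.ncard = N := by
    intro U hU hUu
    obtain ⟨c, hc⟩ := card_dvd_ncard hU
    have hlt := ncard_lt_n hUu
    rw [hN] at hc
    have : c < 2 := by
      by_contra h
      have : N * 2 ≤ N * c := Nat.mul_le_mul_left _ (not_lt.1 h)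
      omega
    obtain rfl | rfl : c = 0 ∨ c = 1 := by omega
    · left; simpa using hc
    · right; simpa using hc
  have hbig : ∀ U : Set (ZMod n), n < 2 * U.ncard → U ≠ Set.univ → ¬ K ≤ period U := by
    intro U hU hUu hper
    rcases hdvd U hper hUu with h | h <;> omega
  have hreach : ∀ U : Set (ZMod n), n < 2 * U.ncard → Reach δa U (n * (n - U.ncard)) :=
    fun U hU => reach_of_periodic hb U
      (fun V hV hVu hVper => absurd hVper (hbig V (by omega) hVu))
  have hcoset : ∀ U : Set (ZMod n), U.Nonempty → U ≠ Set.univ → K ≤ period U →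
      U = K ∨ U = (K : Set (ZMod n))ᶜ := by
    intro U hU hUu hper
    have hUN : U.ncard = N := by
      rcases hdvd U hper hUu with h | h
      · rw [Set.ncard_eq_zero] at h
        exact absurd h hU.ne_empty
      · exact h
    by_cases h0 : 0 ∈ U
    · left
      symm
      apply Set.eq_of_subset_of_ncard_le _ (by omega)
      intro x hx
      simpa using (hper hx 0).1 h0
    · right
      apply Set.eq_of_subset_of_ncard_le _ (by omega)
      intro x hx hxK
      exact h0 ((hper hxK 0).2 (by simpa using hx))
  have h1K : (1 : ZMod n) ∉ K := by
    intro h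
    have : K = ⊤ := by
      rw [eq_top_iff]
      intro x _
      have := K.nsmul_mem h x.val
      simpa using this
    rw [this, AddSubgroup.index_top] at hind
    omega
  have h1K' : (-1 : ZMod n) ∉ K := by simpa using h1K
  -- the full preimage of `Kᶜ` under the letter `a`
  set T := pre δa 1 0 (K : Set (ZMod n))ᶜ with hTdef
  have hT : ∀ x, x ∈ T ↔ δa x ∉ K := by
    intro x
    simp [hTdef, pre]
  have h0Kc : (0 : ZMod n) ∉ (K : Set (ZMod n))ᶜ := by simp
  have hT0 : 0 ∉ T := fun h => (hT 0).1 h hdK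
  have hTN : T.ncard = N := by
    have := ncard_pre_diff hb 1 h0Kc
    rwa [← hTdef, Set.sdiff_singleton_eq_self hT0, hKccard] at this
  have hTne : T ≠ (K : Set (ZMod n))ᶜ := by
    intro hTK
    have hinv : ∀ x, δa x ∈ K ↔ x ∈ K := by
      intro x
      have := hT x
      rw [hTK] at this
      exact (not_iff_not.1 this).symm
    -- every word would then preserve the partition `{K, Kᶜ}`
    have hword : ∀ w : List Letter, ∀ q r,
        (q ∈ K ↔ r ∈ K) ↔ (act δa w q ∈ K ↔ act δa w r ∈ K) := by
      intro w
      induction w with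
      | nil => intro q r; rfl
      | cons x w ih =>
        intro q r
        cases x with
        | a => simp only [act, ← ih, hinv]
        | b =>
          simp only [act, ← ih, AddSubgroup.add_mem_iff_of_index_two hind, h1K, iff_false]
          tauto
    obtain ⟨w, hw⟩ := hcr K ⟨0, K.zero_mem⟩
    have hall : ∀ q, act δa w q ∈ K := fun q => hw.subset ⟨q, trivial, rfl⟩
    have := (hword w 0 1).2 (by simp [hall])
    exact h1K (this.1 K.zero_mem)
  have hTper : ¬ K ≤ period T := by
    intro hper
    have hTnonempty : T.Nonempty := by
      rw [← Set.ncard_pos]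
      omega
    rcases hcoset T hTnonempty (fun h => hT0 (h ▸ trivial)) hper with h | h
    · exact hT0 (h ▸ K.zero_mem)
    · exact hTne h
  -- for `N = 2` the set `T` avoids `K = {0, d}`, so it equals `Kᶜ`
  have hN3 : 3 ≤ N := by
    by_contra hlt
    have hsub : ({0, δa 0} : Set (ZMod n)) ⊆ K := by
      rintro x (rfl | rfl)
      · exact K.zero_mem
      · exact hdK
    have hpair := Set.ncard_pair (Ne.symm hd0)
    have hK2 : ({0, δa 0} : Set (ZMod n)) = K :=
      Set.eq_of_subset_of_ncard_le hsub (by omega)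
    apply hTne
    apply Set.eq_of_subset_of_ncard_le _ (by omega)
    intro x hx hxK
    rw [← hK2] at hxK
    rcases hxK with rfl | rfl
    · exact hT0 hx
    · exact (hT _).1 hx hddK
  have hTr := reach_pre_coset hb hbig hreach hd0 hN hn hN3 h1K' hT hTN hTper
  have hnN : 6 ≤ n * N := by nlinarith
  have hKc : Reach δa (K : Set (ZMod n))ᶜ (n * N - 1) := by
    refine (reach_of_pre hb 1 h0Kc hTr).mono ?_
    simp only [ZMod.val_zero]
    omega
  rcases hcoset S hS hSu hSper with rfl | rfl
  · have hsub : n - N = N := by omega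
    rw [hKcard, hsub]
    have h := hKc.image [Letter.b]
    have himg : act δa [Letter.b] '' (K : Set (ZMod n))ᶜ = K := by
      have hfun : act δa [Letter.b] = fun q => q + 1 := rfl
      rw [hfun]
      ext x
      constructor
      · rintro ⟨q, hq, rfl⟩
        have hq' : q ∉ K := hq
        simp [AddSubgroup.add_mem_iff_of_index_two hind, h1K, hq']
      · intro hx
        refine ⟨x + -1, ?_, by simp⟩
        have hx' : x ∈ K := hx
        simp [AddSubgroup.add_mem_iff_of_index_two hind, h1K, hx']
    rw [himg] at h
    refine h.mono ?_
    simp only [List.length_singleton]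
    omega
  · have hsub : n - N = N := by omega
    rw [hKccard, hsub]
    exact hKc.mono (by omega)

end Half

end DonHalf

/-- A standardized completely reachable binary circular DFA whose orbit
subgroup `K` satisfies `|K| ≥ n/2` fulfills Don's conjecture. -/
theorem stmt1 {n : ℕ} [NeZero n] (δa : ZMod n → ZMod n)
    (hstd : Standardized δa) (hcr : CompletelyReachable δa)
    (hK : n ≤ 2 * Nat.card ↥(orbitSubgroup δa))
    (S : Set (ZMod n)) (hS : S.Nonempty) :
    ∃ w : List Letter, act δa w '' Set.univ = S ∧
      w.length ≤ n * (n - S.ncard) := by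
  have hb := DonHalf.bijOn_of_standardized hstd hcr
  refine DonHalf.reach_of_periodic hb S fun U hSU hUu hUper => ?_
  have hUne : U.Nonempty := by
    rw [← Set.ncard_pos]
    exact ((Set.ncard_pos).2 hS).trans_le hSU
  have hcard := AddSubgroup.card_mul_index (orbitSubgroup δa)
  rw [Nat.card_zmod] at hcard
  have hn := NeZero.pos n
  have hpos : 0 < Nat.card (orbitSubgroup δa) := Nat.card_pos
  have hle : (orbitSubgroup δa).index ≤ 2 := by
    by_contra h
    have : Nat.card (orbitSubgroup δa) * 3 ≤ n := by
      conv_rhs => rw [← hcard]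
      exact Nat.mul_le_mul_left _ (by omega)
    omega
  have hne : (orbitSubgroup δa).index ≠ 0 := by
    intro h
    rw [h] at hcard
    omega
  obtain h1 | h2 : (orbitSubgroup δa).index = 1 ∨ (orbitSubgroup δa).index = 2 := by omega
  · -- the orbit generates the whole group, so `U` would be everything
    rw [AddSubgroup.index_eq_one] at h1
    obtain ⟨u, hu⟩ := hUne
    refine absurd (Set.eq_univ_of_forall fun x => ?_) hUu
    have hx : x - u ∈ orbitSubgroup δa := h1 ▸ AddSubgroup.mem_top _
    simpa using (hUper hx u).1 hu
  · rw [h2] at hcard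
    exact DonHalf.reach_coset hb hcr (hstd.1 0) rfl (by omega) hUne hUu hUper
end

section
/- For every even integer n ≥ 10, the DFA 𝒜_n is completely reachable, and the (n−2)-element subset ℤ_n \ {n−1, n/2−1} has no reaching word of length at most 2n = n·(n − (n−2)). Consequently, there are infinitely many binary completely reachable DFAs that do not fulfill Don's conjecture (which asserts that every k-element reachable subset of an n-state DFA has a reaching word of length at most n(n−k)). -/
/-- The action of the letter `a` in the DFA `𝒜_n` (for even `n ≥ 10`):
`0 ↦ n−3 ↦ 1 ↦ n−2 ↦ n/2 ↦ n−4 ↦ n−1 ↦ n/2`, all other states are fixed. -/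
def deltaA (n : ℕ) : ZMod n → ZMod n := fun q =>
  if q = 0 then ((n - 3 : ℕ) : ZMod n)
  else if q = ((n - 3 : ℕ) : ZMod n) then 1
  else if q = 1 then ((n - 2 : ℕ) : ZMod n)
  else if q = ((n - 2 : ℕ) : ZMod n) then ((n / 2 : ℕ) : ZMod n)
  else if q = ((n / 2 : ℕ) : ZMod n) then ((n - 4 : ℕ) : ZMod n)
  else if q = ((n - 4 : ℕ) : ZMod n) then ((n - 1 : ℕ) : ZMod n)
  else if q = ((n - 1 : ℕ) : ZMod n) then ((n / 2 : ℕ) : ZMod n)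
  else q

namespace DonCounterexample

/-- The map `deltaA n` on the canonical representatives `0, …, n - 1`. -/
def deltaNat (n x : ℕ) : ℕ :=
  if x = 0 then n - 3
  else if x = n - 3 then 1
  else if x = 1 then n - 2
  else if x = n - 2 then n / 2
  else if x = n / 2 then n - 4
  else if x = n - 4 then n - 1
  else if x = n - 1 then n / 2
  else x

lemma natCast_eq_iff {n x y : ℕ} (hx : x < n) (hy : y < n) :
    ((x : ZMod n) = (y : ZMod n)) ↔ x = y := by
  rw [ZMod.natCast_eq_natCast_iff', Nat.mod_eq_of_lt hx, Nat.mod_eq_of_lt hy]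

lemma exists_natCast {n : ℕ} (hn : 10 ≤ n) (q : ZMod n) : ∃ x < n, q = (x : ZMod n) := by
  have : NeZero n := ⟨by omega⟩
  exact ⟨q.val, q.val_lt, (ZMod.natCast_zmod_val q).symm⟩

lemma deltaNat_lt {n x : ℕ} (hn : 10 ≤ n) (hx : x < n) : deltaNat n x < n := by
  unfold deltaNat
  split_ifs <;> omega

lemma deltaA_natCast {n x : ℕ} (hn : 10 ≤ n) (hx : x < n) :
    deltaA n (x : ZMod n) = (deltaNat n x : ZMod n) := by
  have h0 : (x : ZMod n) = 0 ↔ x = 0 := by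
    simpa using natCast_eq_iff (y := 0) hx (by omega)
  have h1 : (x : ZMod n) = 1 ↔ x = 1 := by
    simpa using natCast_eq_iff (y := 1) hx (by omega)
  simp only [deltaA, deltaNat, h0, h1, natCast_eq_iff hx (show n - 3 < n by omega),
    natCast_eq_iff hx (show n - 2 < n by omega), natCast_eq_iff hx (show n / 2 < n by omega),
    natCast_eq_iff hx (show n - 4 < n by omega), natCast_eq_iff hx (show n - 1 < n by omega)]
  split_ifs <;> simp

lemma deltaA_ne_zero {n : ℕ} (hn : 10 ≤ n) (q : ZMod n) : deltaA n q ≠ 0 := by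
  obtain ⟨x, hx, rfl⟩ := exists_natCast hn q
  rw [deltaA_natCast hn hx]
  have := natCast_eq_iff (y := 0) (deltaNat_lt hn hx) (by omega)
  rw [Nat.cast_zero] at this
  rw [Ne, this]
  intro h
  unfold deltaNat at h
  split_ifs at h <;> omega

/-- The preimage may be chosen different from `n - 1`, because `n - 1` shares its value with
`n - 2`. -/
lemma exists_deltaA_eq {n : ℕ} (hn : 10 ≤ n) {q : ZMod n} (hq : q ≠ 0) :
    ∃ p, p ≠ ((n - 1 : ℕ) : ZMod n) ∧ deltaA n p = q := by
  obtain ⟨y, hy, rfl⟩ := exists_natCast hn q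
  have hy0 : y ≠ 0 := by
    rintro rfl
    simp at hq
  suffices h : ∃ x < n, x ≠ n - 1 ∧ deltaNat n x = y by
    obtain ⟨x, hx, hx1, hxy⟩ := h
    refine ⟨x, ?_, by rw [deltaA_natCast hn hx, hxy]⟩
    rwa [Ne, natCast_eq_iff hx (by omega)]
  have key : ∀ x, x < n → x ≠ n - 1 → deltaNat n x = y →
      ∃ x < n, x ≠ n - 1 ∧ deltaNat n x = y := fun x h1 h2 h3 => ⟨x, h1, h2, h3⟩
  obtain h | h | h | h | h | h | h : y = n - 3 ∨ y = 1 ∨ y = n - 2 ∨ y = n / 2 ∨ y = n - 4 ∨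
      y = n - 1 ∨ (y ≠ n - 3 ∧ y ≠ 1 ∧ y ≠ n - 2 ∧ y ≠ n / 2 ∧ y ≠ n - 4 ∧ y ≠ n - 1) := by
    omega
  · refine key 0 (by omega) (by omega) ?_
    unfold deltaNat
    split_ifs <;> omega
  · refine key (n - 3) (by omega) (by omega) ?_
    unfold deltaNat
    split_ifs <;> omega
  · refine key 1 (by omega) (by omega) ?_
    rw [deltaNat, if_neg one_ne_zero, if_neg (by omega), if_pos rfl, h]
  · refine key (n - 2) (by omega) (by omega) ?_
    unfold deltaNat
    split_ifs <;> omega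
  · refine key (n / 2) (by omega) (by omega) ?_
    unfold deltaNat
    split_ifs <;> omega
  · refine key (n - 4) (by omega) (by omega) ?_
    unfold deltaNat
    split_ifs <;> omega
  · refine key y (by omega) (by omega) ?_
    unfold deltaNat
    split_ifs <;> omega

/-- The only pair of distinct states merged by `a` is `{n - 2, n - 1}`. -/
lemma deltaA_injOn {n : ℕ} (hn : 10 ≤ n) {p q : ZMod n} (hp2 : p ≠ ((n - 2 : ℕ) : ZMod n))
    (hp1 : p ≠ ((n - 1 : ℕ) : ZMod n)) (h : deltaA n q = deltaA n p) : q = p := by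
  obtain ⟨x, hx, rfl⟩ := exists_natCast hn p
  obtain ⟨y, hy, rfl⟩ := exists_natCast hn q
  rw [deltaA_natCast hn hx, deltaA_natCast hn hy,
    natCast_eq_iff (deltaNat_lt hn hy) (deltaNat_lt hn hx)] at h
  rw [Ne, natCast_eq_iff hx (by omega)] at hp1 hp2
  rw [natCast_eq_iff hy hx]
  unfold deltaNat at h
  split_ifs at h <;> omega

lemma act_append {n : ℕ} (δ : ZMod n → ZMod n) (u v : List Letter) (q : ZMod n) :
    act δ (u ++ v) q = act δ v (act δ u q) := by
  induction u generalizing q with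
  | nil => rfl
  | cons l u ih => cases l <;> exact ih _

lemma act_replicate_b {n : ℕ} (δ : ZMod n → ZMod n) (k : ℕ) (q : ZMod n) :
    act δ (List.replicate k Letter.b) q = q + k := by
  induction k generalizing q with
  | zero => simp [act]
  | succ k ih =>
    rw [List.replicate_succ]
    change act δ (List.replicate k Letter.b) (q + 1) = _
    rw [ih]
    push_cast
    ring

/-! ### Complete reachability -/

/-- A word whose image contains `S` and which merges two states into `S` reaches `S` from a
strictly larger set, namely from the preimage of `S`. -/
lemma exists_larger {n : ℕ} [NeZero n] (f : ZMod n → ZMod n) (S : Set (ZMod n))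
    (hS : S ⊆ Set.range f) {x y : ZMod n} (hxy : x ≠ y) (hf : f x = f y) (hx : f x ∈ S) :
    ∃ T : Set (ZMod n), f '' T = S ∧ S.ncard < T.ncard := by
  refine ⟨f ⁻¹' S, Set.image_preimage_eq_of_subset hS, ?_⟩
  have himg : f '' (f ⁻¹' S \ {x}) = S := by
    apply Set.Subset.antisymm
    · rintro _ ⟨z, hz, rfl⟩
      exact hz.1
    · intro s hs
      obtain ⟨z, rfl⟩ := hS hs
      by_cases hzx : z = x
      · exact ⟨y, ⟨by rw [Set.mem_preimage, ← hf]; exact hx, hxy.symm⟩, by rw [hzx, hf]⟩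
      · exact ⟨z, ⟨hs, hzx⟩, rfl⟩
  calc S.ncard = (f '' (f ⁻¹' S \ {x})).ncard := by rw [himg]
    _ ≤ (f ⁻¹' S \ {x}).ncard := Set.ncard_image_le (Set.toFinite _)
    _ < (f ⁻¹' S).ncard := Set.ncard_sdiff_singleton_lt_of_mem hx (Set.toFinite _)

lemma extend_step {n : ℕ} [NeZero n] (hn : 10 ≤ n) (hev : Even n) (S : Set (ZMod n))
    (hne : S.Nonempty) (hS : S ≠ Set.univ) :
    ∃ (w : List Letter) (T : Set (ZMod n)), act (deltaA n) w '' T = S ∧ S.ncard < T.ncard := by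
  have hmerge : ((n - 2 : ℕ) : ZMod n) ≠ ((n - 1 : ℕ) : ZMod n) := by
    rw [Ne, natCast_eq_iff (by omega) (by omega)]
    omega
  have hd2 : deltaA n ((n - 2 : ℕ) : ZMod n) = ((n / 2 : ℕ) : ZMod n) := by
    rw [deltaA_natCast hn (by omega)]
    congr 1
    unfold deltaNat
    split_ifs <;> omega
  have hd1 : deltaA n ((n - 1 : ℕ) : ZMod n) = ((n / 2 : ℕ) : ZMod n) := by
    rw [deltaA_natCast hn (by omega)]
    congr 1
    unfold deltaNat
    split_ifs <;> omega
  have hdh : deltaA n ((n / 2 - 1 : ℕ) : ZMod n) = ((n / 2 - 1 : ℕ) : ZMod n) := by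
    rw [deltaA_natCast hn (by omega)]
    congr 1
    unfold deltaNat
    split_ifs <;> omega
  have hm1 : ((n - 1 : ℕ) : ZMod n) = -1 := by
    rw [Nat.cast_sub (by omega)]
    simp
  have hh : ((n / 2 - 1 : ℕ) : ZMod n) = ((n / 2 : ℕ) : ZMod n) - 1 := by
    rw [Nat.cast_sub (by omega)]
    simp
  by_cases hA : ∃ i : ℕ, (i : ZMod n) ∉ S ∧ ((n / 2 : ℕ) : ZMod n) + i ∈ S
  · obtain ⟨i, hi, hiS⟩ := hA
    have hact : ∀ q, act (deltaA n) (Letter.a :: List.replicate i Letter.b) q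
        = deltaA n q + i := fun q => act_replicate_b _ _ _
    refine ⟨_, exists_larger (act (deltaA n) (Letter.a :: List.replicate i Letter.b)) S ?_
      hmerge ?_ ?_⟩
    · intro s hs
      have : s - i ≠ 0 := fun h => hi (by rwa [← sub_eq_zero.1 h])
      obtain ⟨p, -, hp⟩ := exists_deltaA_eq hn this
      exact ⟨p, by rw [hact, hp]; ring⟩
    · rw [hact, hact, hd1, hd2]
    · rwa [hact, hd2]
  by_cases hB : ∃ i : ℕ, (i : ZMod n) ∉ S ∧ ((n / 2 : ℕ) : ZMod n) - 1 + i ∈ S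
  · obtain ⟨i, hi, hiS⟩ := hB
    let w : List Letter := Letter.a :: (List.replicate (n - 1) Letter.b ++
      (Letter.a :: List.replicate i Letter.b))
    have hact : ∀ q, act (deltaA n) w q = deltaA n (deltaA n q - 1) + i := by
      intro q
      change act (deltaA n) (List.replicate (n - 1) Letter.b ++
        (Letter.a :: List.replicate i Letter.b)) (deltaA n q) = _
      rw [act_append, act_replicate_b, hm1, ← sub_eq_add_neg]
      exact act_replicate_b _ _ _
    refine ⟨_, exists_larger (act (deltaA n) w) S ?_ hmerge ?_ ?_⟩
    · intro s hs
      have : s - i ≠ 0 := fun h => hi (by rwa [← sub_eq_zero.1 h])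
      obtain ⟨p, hp1, hp⟩ := exists_deltaA_eq hn this
      have hp0 : p + 1 ≠ 0 := fun h => hp1 (by rw [hm1]; exact eq_neg_of_add_eq_zero_left h)
      obtain ⟨r, -, hr⟩ := exists_deltaA_eq hn hp0
      exact ⟨r, by rw [hact, hr, add_sub_cancel_right, hp]; ring⟩
    · rw [hact, hact, hd1, hd2]
    · rwa [hact, hd2, ← hh, hdh, hh]
  exfalso
  push Not at hA hB
  have hcast : ((n / 2 : ℕ) : ZMod n) + ((n / 2 : ℕ) : ZMod n) = 0 := by
    obtain ⟨m, rfl⟩ := hev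
    rw [← Nat.cast_add, show (m + m) / 2 + (m + m) / 2 = m + m by omega, ZMod.natCast_self]
  have hpred : ∀ q : ZMod n, q ∉ S → q - 1 ∉ S := by
    intro q hq
    obtain ⟨i, -, rfl⟩ := exists_natCast hn q
    have h1 := hA i hq
    obtain ⟨j, -, hj⟩ := exists_natCast hn (((n / 2 : ℕ) : ZMod n) + i)
    rw [hj] at h1
    have h2 := hB j h1
    rw [← hj] at h2
    rwa [show (i : ZMod n) - 1 = ((n / 2 : ℕ) : ZMod n) - 1 + (((n / 2 : ℕ) : ZMod n) + i) by
      linear_combination -hcast]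
  obtain ⟨q, hq⟩ := (Set.ne_univ_iff_exists_notMem S).1 hS
  have hall : ∀ k : ℕ, q - k ∉ S := by
    intro k
    induction k with
    | zero => simpa using hq
    | succ k ih =>
      have := hpred _ ih
      rwa [sub_sub, ← Nat.cast_succ] at this
  obtain ⟨s, hs⟩ := hne
  obtain ⟨k, -, hk⟩ := exists_natCast hn (q - s)
  apply hall k
  rwa [← hk, sub_sub_cancel]

lemma completelyReachable_deltaA {n : ℕ} (hn : 10 ≤ n) (hev : Even n) :
    CompletelyReachable (deltaA n) := by
  have : NeZero n := ⟨by omega⟩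
  intro S hne
  induction hd : n - S.ncard using Nat.strong_induction_on generalizing S with
  | _ d ih =>
    by_cases hS : S = Set.univ
    · exact ⟨[], by simp [act, hS]⟩
    obtain ⟨w, T, hT, hlt⟩ := extend_step hn hev S hne hS
    have hTn : T.ncard ≤ n := by
      simpa [Set.ncard_univ, Nat.card_zmod] using Set.ncard_le_ncard (Set.subset_univ T)
    have hTne : T.Nonempty := by
      rw [← hT] at hne
      exact hne.of_image
    obtain ⟨v, hv⟩ := ih (n - T.ncard) (by omega) T hTne rfl
    refine ⟨v ++ w, ?_⟩
    rw [← hT, ← hv, Set.image_image]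
    simp only [act_append]

/-! ### Lower bound for the reaching words -/

/-- The states outside the image of the word `w` in `𝒜_n`. -/
def missed (n : ℕ) (w : List Letter) : Set (ZMod n) :=
  {q | ∀ p, act (deltaA n) w p ≠ q}

lemma mem_missed_append_b {n : ℕ} (w : List Letter) (k : ℕ) (q : ZMod n) :
    q + k ∈ missed n (w ++ List.replicate k Letter.b) ↔ q ∈ missed n w := by
  simp only [missed, Set.mem_ofPred_eq, act_append, act_replicate_b, ne_eq, add_left_inj]

lemma zero_mem_missed {n : ℕ} (hn : 10 ≤ n) (w : List Letter) :
    0 ∈ missed n (w ++ [Letter.a]) := by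
  intro p
  rw [act_append]
  exact deltaA_ne_zero hn _

lemma mem_missed_of_deltaA {n : ℕ} {w : List Letter} {p : ZMod n}
    (h : deltaA n p ∈ missed n (w ++ [Letter.a])) : p ∈ missed n w := by
  intro r hr
  apply h r
  rw [act_append, hr]
  rfl

lemma deltaA_mem_missed {n : ℕ} (hn : 10 ≤ n) {w : List Letter} {p : ZMod n}
    (hp2 : p ≠ ((n - 2 : ℕ) : ZMod n)) (hp1 : p ≠ ((n - 1 : ℕ) : ZMod n))
    (h : p ∈ missed n w) : deltaA n p ∈ missed n (w ++ [Letter.a]) := by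
  intro r hr
  rw [act_append] at hr
  exact h r (deltaA_injOn hn hp2 hp1 hr)

lemma exists_last_a_aux (w : List Letter) :
    (∃ k, w = List.replicate k Letter.b) ∨
      ∃ u k, w = (u ++ [Letter.a]) ++ List.replicate k Letter.b := by
  induction w using List.reverseRecOn with
  | nil => exact Or.inl ⟨0, rfl⟩
  | append_singleton w l ih =>
    cases l with
    | a => exact Or.inr ⟨w, 0, by simp⟩
    | b =>
      rcases ih with ⟨k, rfl⟩ | ⟨u, k, rfl⟩
      · exact Or.inl ⟨k + 1, List.replicate_succ'.symm⟩
      · exact Or.inr ⟨u, k + 1, by rw [List.replicate_succ', List.append_assoc]⟩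

/-- A word missing some state has the form `u a b^k`, and it misses `k mod n`. -/
lemma exists_last_a {n : ℕ} (hn : 10 ≤ n) {w : List Letter} (h : (missed n w).Nonempty) :
    ∃ (u : List Letter) (k : ℕ), (k : ZMod n) ∈ missed n w ∧ w.length = u.length + 1 + k ∧
      ∀ q : ZMod n, q ∈ missed n (u ++ [Letter.a]) ↔ q + k ∈ missed n w := by
  rcases exists_last_a_aux w with ⟨k, rfl⟩ | ⟨u, k, rfl⟩
  · obtain ⟨q, hq⟩ := h
    exact absurd (by rw [act_replicate_b]; ring) (hq (q - k))
  · refine ⟨u, k, ?_, by simp; ring, fun q => (mem_missed_append_b _ _ _).symm⟩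
    simpa using (mem_missed_append_b (u ++ [Letter.a]) k (0 : ZMod n)).2 (zero_mem_missed hn u)

lemma le_of_natCast_eq {n k x : ℕ} (hx : x < n) (h : (k : ZMod n) = (x : ZMod n)) : x ≤ k := by
  rw [ZMod.natCast_eq_natCast_iff', Nat.mod_eq_of_lt hx] at h
  rw [← h]
  exact Nat.mod_le _ _

/-- If `u a` misses exactly `0` and the state `deltaNat n c`, where `c` is `n - 3` or `n - 4`,
then `u` misses only states among `c, n - 2, n - 1`, so it ends with at least `c` letters `b`
preceded by an `a`. -/
lemma length_ge_of_missed {n c : ℕ} (hn : 10 ≤ n) (hc : c = n - 3 ∨ c = n - 4)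
    {u : List Letter}
    (h : ∀ q : ZMod n, q ∈ missed n (u ++ [Letter.a]) ↔
      q = 0 ∨ q = ((deltaNat n c : ℕ) : ZMod n)) : c + 1 ≤ u.length := by
  have hcn : c < n := by omega
  have hmem : (c : ZMod n) ∈ missed n u := by
    apply mem_missed_of_deltaA
    rw [h, deltaA_natCast hn hcn]
    exact Or.inr rfl
  obtain ⟨v, k, hk, hlen, -⟩ := exists_last_a hn ⟨_, hmem⟩
  have hck : c ≤ k := by
    by_cases h2 : (k : ZMod n) = ((n - 2 : ℕ) : ZMod n)
    · have := le_of_natCast_eq (by omega) h2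
      omega
    by_cases h1 : (k : ZMod n) = ((n - 1 : ℕ) : ZMod n)
    · have := le_of_natCast_eq (by omega) h1
      omega
    have hd := (h _).1 (deltaA_mem_missed hn h2 h1 hk)
    rw [← deltaA_natCast hn hcn] at hd
    rcases hd with hd | hd
    · exact absurd hd (deltaA_ne_zero hn _)
    · exact le_of_natCast_eq hcn (deltaA_injOn hn h2 h1 hd.symm).symm
  omega

lemma length_gt {n : ℕ} (hn : 10 ≤ n) (hev : Even n) (w : List Letter)
    (hw : ∀ q : ZMod n, q ∈ missed n w ↔
      q = ((n - 1 : ℕ) : ZMod n) ∨ q = ((n / 2 - 1 : ℕ) : ZMod n)) : 2 * n < w.length := by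
  have hm1 : ((n - 1 : ℕ) : ZMod n) = -1 := by
    rw [Nat.cast_sub (by omega)]
    simp
  have hm2 : ((n - 2 : ℕ) : ZMod n) = -2 := by
    rw [Nat.cast_sub (by omega)]
    simp
  have hh : ((n / 2 - 1 : ℕ) : ZMod n) = ((n / 2 : ℕ) : ZMod n) - 1 := by
    rw [Nat.cast_sub (by omega)]
    simp
  have hcast : ((n / 2 : ℕ) : ZMod n) + ((n / 2 : ℕ) : ZMod n) = 0 := by
    obtain ⟨m, rfl⟩ := hev
    rw [← Nat.cast_add, show (m + m) / 2 + (m + m) / 2 = m + m by omega, ZMod.natCast_self]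
  obtain ⟨u, k, hk, hlen, hu⟩ := exists_last_a hn ⟨_, (hw _).2 (Or.inl rfl)⟩
  have hk_ge : n / 2 - 1 ≤ k := by
    rcases (hw _).1 hk with h | h
    · have := le_of_natCast_eq (by omega) h
      omega
    · exact le_of_natCast_eq (by omega) h
  -- Both residues of `k` give `{0, n/2}`, since this pair is invariant under `+ n/2`.
  have hu' : ∀ q : ZMod n, q ∈ missed n (u ++ [Letter.a]) ↔
      q = 0 ∨ q = ((n / 2 : ℕ) : ZMod n) := by
    intro q
    rw [hu, hw, hh, hm1]
    rcases (hw _).1 hk with h | h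
    · rw [h, hm1]
      refine or_congr ⟨fun h => ?_, fun h => ?_⟩ ⟨fun h => ?_, fun h => ?_⟩ <;>
        linear_combination h
    · rw [h, hh, or_comm]
      refine or_congr ⟨fun h => ?_, fun h => ?_⟩ ⟨fun h => ?_, fun h => ?_⟩
      · linear_combination h
      · linear_combination h
      · linear_combination h - hcast
      · linear_combination h + hcast
  have hM : ∀ q : ZMod n, q ∈ missed n u ↔
      q = ((n - 2 : ℕ) : ZMod n) ∨ q = ((n - 1 : ℕ) : ZMod n) := by
    have hmerged : ∀ x, x = n - 2 ∨ x = n - 1 → deltaNat n x = n / 2 := by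
      intro x hx
      unfold deltaNat
      split_ifs <;> omega
    intro q
    constructor
    · intro hq
      by_contra! hcon
      rcases (hu' _).1 (deltaA_mem_missed hn hcon.1 hcon.2 hq) with h | h
      · exact deltaA_ne_zero hn _ h
      · rw [← hmerged (n - 2) (Or.inl rfl), ← deltaA_natCast hn (by omega)] at h
        exact hcon.1 (deltaA_injOn hn hcon.1 hcon.2 h.symm).symm
    · rintro (rfl | rfl) <;> apply mem_missed_of_deltaA <;>
        rw [hu', deltaA_natCast hn (by omega), hmerged _ (by omega)] <;> exact Or.inr rfl
  obtain ⟨v, l, hl, hlen2, hv⟩ := exists_last_a hn ⟨_, (hM _).2 (Or.inl rfl)⟩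
  rcases (hM _).1 hl with h | h
  · have hl_ge := le_of_natCast_eq (by omega) h
    have hd : deltaNat n (n - 3) = 1 := by
      unfold deltaNat
      split_ifs <;> omega
    have := length_ge_of_missed (u := v) hn (Or.inl rfl) (by
      intro q
      rw [hv, hM, h, hm1, hm2, hd, Nat.cast_one]
      refine or_congr ⟨fun h => ?_, fun h => ?_⟩ ⟨fun h => ?_, fun h => ?_⟩ <;>
        linear_combination h)
    omega
  · have hl_ge := le_of_natCast_eq (by omega) h
    have hd : deltaNat n (n - 4) = n - 1 := by
      unfold deltaNat
      split_ifs <;> omega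
    have := length_ge_of_missed (u := v) hn (Or.inr rfl) (by
      intro q
      rw [hv, hM, h, hd, hm1, hm2, or_comm]
      refine or_congr ⟨fun h => ?_, fun h => ?_⟩ ⟨fun h => ?_, fun h => ?_⟩ <;>
        linear_combination h)
    omega

end DonCounterexample

/-- For every even `n ≥ 10`, the DFA `𝒜_n` is completely reachable, yet the
`(n−2)`-element subset `ℤ_n \ {n−1, n/2−1}` has no reaching word of length at most
`2n = n·(n−(n−2))`; hence there are infinitely many binary completely reachable DFAs
violating Don's conjecture. -/
theorem stmt2 (n : ℕ) (hn : 10 ≤ n) (hev : Even n) :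
    CompletelyReachable (deltaA n) ∧
    ∀ w : List Letter,
      act (deltaA n) w '' Set.univ =
        Set.univ \ {((n - 1 : ℕ) : ZMod n), ((n / 2 - 1 : ℕ) : ZMod n)} →
      2 * n < w.length := by
  refine ⟨DonCounterexample.completelyReachable_deltaA hn hev, fun w hw =>
    DonCounterexample.length_gt hn hev w fun q => ?_⟩
  have hq : q ∈ act (deltaA n) w '' Set.univ ↔ q ∉ DonCounterexample.missed n w := by
    simp [DonCounterexample.missed]
  rw [hw] at hq
  simp only [Set.mem_sdiff, Set.mem_univ, true_and, Set.mem_insert_iff,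
    Set.mem_singleton_iff] at hq
  exact (not_iff_not.1 hq).symm
end

section
/- Let 𝒜 be a standardized completely reachable binary circular DFA on ℤ_n (n even) whose orbit subgroup K equals the subgroup 2ℤ_n of even residues. If a nonempty proper subset S ⊆ ℤ_n is not a union of K-cosets, then S is n-expandable. -/
/-- A word `w` expands a subset `S` if some strictly larger subset `R` satisfies `δ(R,w) = S`. -/
def Expands {n : ℕ} (δa : ZMod n → ZMod n) (w : List Letter) (S : Set (ZMod n)) : Prop :=
  ∃ R : Set (ZMod n), S.ncard < R.ncard ∧ act δa w '' R = S

/-- A subset `S` is `ℓ`-expandable if some word of length at most `ℓ` expands it. -/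
def Expandable {n : ℕ} (δa : ZMod n → ZMod n) (ℓ : ℕ) (S : Set (ZMod n)) : Prop :=
  ∃ w : List Letter, w.length ≤ ℓ ∧ Expands δa w S

/-- The chain of subgroups `H_0 = {0}`, `H_{i+1} = ⟨H_i ∪ (δa(H_i) \ H_i)⟩`. -/
def Hchain {n : ℕ} (δa : ZMod n → ZMod n) : ℕ → AddSubgroup (ZMod n)
  | 0 => ⊥
  | i + 1 =>
      AddSubgroup.closure
        ((Hchain δa i : Set (ZMod n)) ∪
          (δa '' (Hchain δa i : Set (ZMod n)) \ (Hchain δa i : Set (ZMod n))))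

/-- `T` is a union of `H`-cosets iff it is closed under adding elements of `H`. -/
def IsUnionOfCosets {n : ℕ} (H : AddSubgroup (ZMod n)) (T : Set (ZMod n)) : Prop :=
  ∀ x ∈ T, ∀ h ∈ H, x + h ∈ T

/-- `m(S) = min {i : H_i ∩ S ∉ {∅, H_i}}`. -/
noncomputable def mOf {n : ℕ} (δa : ZMod n → ZMod n) (S : Set (ZMod n)) : ℕ :=
  sInf {i : ℕ | ((Hchain δa i : Set (ZMod n)) ∩ S).Nonempty ∧
    (Hchain δa i : Set (ZMod n)) ∩ S ≠ (Hchain δa i : Set (ZMod n))}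

/-- `t(S) = max {i : H_{m(S)} ∩ S is a union of H_i-cosets}`. -/
noncomputable def tOf {n : ℕ} (δa : ZMod n → ZMod n) (S : Set (ZMod n)) : ℕ :=
  sSup {i : ℕ | IsUnionOfCosets (Hchain δa i)
    ((Hchain δa (mOf δa S) : Set (ZMod n)) ∩ S)}

theorem act_replicate {n : ℕ} (δa : ZMod n → ZMod n) (j k : ℕ) (q : ZMod n) :
    act δa (List.replicate j Letter.a ++ List.replicate k Letter.b) q = δa^[j] q + k := by
  induction j generalizing q with
  | zero =>
    simp only [List.replicate_zero, List.nil_append, Function.iterate_zero, id_eq]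
    induction k generalizing q with
    | zero => simp [act]
    | succ k ih => simp only [List.replicate_succ, act, ih]; push_cast; ring
  | succ j ih => simp only [List.replicate_succ, List.cons_append, act, ih, Function.iterate_succ_apply]

/-- A word acts either as a permutation or with range no larger than that of `δa`. -/
theorem range_act {n : ℕ} [NeZero n] (δa : ZMod n → ZMod n) (w : List Letter) :
    Set.range (act δa w) = Set.univ ∨ (Set.range (act δa w)).ncard ≤ (Set.range δa).ncard := by
  induction w with
  | nil => left; ext x; simp [act]
  | cons l w ih =>
    cases l with
    | a =>
      right
      have : Set.range (act δa (Letter.a :: w)) = act δa w '' Set.range δa := by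
        rw [← Set.range_comp]; rfl
      rw [this]
      exact Set.ncard_image_le (Set.toFinite _)
    | b =>
      have : Set.range (act δa (Letter.b :: w)) = Set.range (act δa w) :=
        (Equiv.addRight (1 : ZMod n)).surjective.range_comp (act δa w)
      rwa [this]

/-- The set of nonzero states is reachable and `δa` omits `0`, so counting along a reaching word shows
that `δa` omits nothing else. -/
theorem mem_range_of_ne_zero {n : ℕ} [NeZero n] (δa : ZMod n → ZMod n)
    (hstd : Standardized δa) (hcr : CompletelyReachable δa) {q : ZMod n} (hq : q ≠ 0) :
    q ∈ Set.range δa := by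
  obtain ⟨w, hw⟩ := hcr {0}ᶜ ⟨q, hq⟩
  rw [Set.image_univ] at hw
  have hsub : Set.range δa ⊆ {0}ᶜ := by
    rintro _ ⟨x, rfl⟩
    exact hstd.1 x
  rcases range_act δa w with h | h
  · rw [hw] at h
    exact absurd (h ▸ Set.mem_univ (0 : ZMod n)) (by simp)
  · rw [hw] at h
    rw [Set.eq_of_subset_of_ncard_le hsub h (Set.toFinite _)]
    exact hq

theorem exists_nonzero_preimage {n : ℕ} [NeZero n] (δa : ZMod n → ZMod n)
    (hstd : Standardized δa) (hcr : CompletelyReachable δa) {q : ZMod n} (hq : q ≠ 0) :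
    ∃ p, p ≠ 0 ∧ δa p = q := by
  obtain ⟨p, rfl⟩ := mem_range_of_ne_zero δa hstd hcr hq
  by_cases hp : p = 0
  · subst hp
    -- `δa 0` has a second preimage, necessarily different from `0`.
    obtain ⟨r, hr, hr0⟩ := Set.exists_ne_of_one_lt_ncard ((hstd.2 (δa 0)).2 rfl) 0
    exact ⟨r, hr0, hr⟩
  · exact ⟨p, hp, rfl⟩

theorem exists_nonzero_iterate_preimage {n : ℕ} [NeZero n] (δa : ZMod n → ZMod n)
    (hstd : Standardized δa) (hcr : CompletelyReachable δa) (j : ℕ) {q : ZMod n} (hq : q ≠ 0) :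
    ∃ p, p ≠ 0 ∧ δa^[j] p = q := by
  induction j generalizing q with
  | zero => exact ⟨q, hq, rfl⟩
  | succ j ih =>
    obtain ⟨p, hp, rfl⟩ := exists_nonzero_preimage δa hstd hcr hq
    obtain ⟨r, hr, rfl⟩ := ih hp
    exact ⟨r, hr, Function.iterate_succ_apply' _ _ _⟩

/-- The nonzero part of the preimage of `S` under `a^j b^k` already maps onto `S`, and the preimage
contains the extra state `0`. -/
theorem expands_word {n : ℕ} [NeZero n] (δa : ZMod n → ZMod n)
    (hstd : Standardized δa) (hcr : CompletelyReachable δa) (S : Set (ZMod n)) (j k : ℕ)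
    (hk : (k : ZMod n) ∉ S) (hkj : (k : ZMod n) + δa^[j] 0 ∈ S) :
    Expands δa (List.replicate j Letter.a ++ List.replicate k Letter.b) S := by
  let f : ZMod n → ZMod n := fun q => δa^[j] q + k
  have hf : act δa (List.replicate j Letter.a ++ List.replicate k Letter.b) = f :=
    funext fun q => act_replicate δa j k q
  have hon : S ⊆ f '' (f ⁻¹' S \ {0}) := by
    intro s hs
    have hs0 : s - k ≠ 0 := by
      intro h
      exact hk (sub_eq_zero.1 h ▸ hs)
    obtain ⟨p, hp, hps⟩ := exists_nonzero_iterate_preimage δa hstd hcr j hs0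
    have hfp : f p = s := by simp [f, hps]
    exact ⟨p, ⟨by simpa [hfp] using hs, hp⟩, hfp⟩
  have h0 : (0 : ZMod n) ∈ f ⁻¹' S := by
    change δa^[j] 0 + k ∈ S
    rwa [add_comm]
  refine ⟨f ⁻¹' S, ?_, ?_⟩
  · calc S.ncard ≤ (f '' (f ⁻¹' S \ {0})).ncard := Set.ncard_le_ncard hon (Set.toFinite _)
      _ ≤ (f ⁻¹' S \ {0}).ncard := Set.ncard_image_le (Set.toFinite _)
      _ < (f ⁻¹' S).ncard := Set.ncard_sdiff_singleton_lt_of_mem h0 (Set.toFinite _)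
  · rw [hf]
    exact (Set.image_preimage_subset f S).antisymm
      (hon.trans (Set.image_mono Set.sdiff_subset))

/-- A subset of a finite group that pulls back into itself under a translation is invariant
under it. -/
theorem invariant_of_imp {n : ℕ} [NeZero n] (S : Set (ZMod n)) (d : ZMod n)
    (h : ∀ x, x + d ∈ S → x ∈ S) (x : ZMod n) : x + d ∈ S ↔ x ∈ S := by
  refine ⟨h x, fun hx => ?_⟩
  have hsub : (fun y => y - d) '' S ⊆ S := by
    rintro _ ⟨y, hy, rfl⟩
    exact h _ (by simpa using hy)
  have heq := Set.eq_of_subset_of_ncard_le hsub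
    (Set.ncard_image_of_injective S (sub_left_injective (b := d))).ge (Set.toFinite _)
  rw [← heq] at hx
  obtain ⟨y, hy, rfl⟩ := hx
  simpa using hy

theorem exists_not_invariant {n : ℕ} (δa : ZMod n → ZMod n) (S : Set (ZMod n))
    (hnc : ¬ IsUnionOfCosets (orbitSubgroup δa) S) :
    ∃ j, ¬ ∀ x, x + δa^[j] 0 ∈ S ↔ x ∈ S := by
  by_contra! hall
  apply hnc
  intro x hx h hh
  have key : ∀ x, x + h ∈ S ↔ x ∈ S := by
    induction hh using AddSubgroup.closure_induction with
    | mem y hy =>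
      obtain ⟨i, -, rfl⟩ := hy
      exact hall i
    | zero => simp
    | add y z _ _ hy hz =>
      intro x
      rw [← add_assoc, hz, hy]
    | neg y _ hy =>
      intro x
      rw [← hy, neg_add_cancel_right]
  exact (key x).2 hx

/-- In a standardized completely reachable binary circular DFA on `ZMod n`
(`n` even) whose orbit subgroup equals `2ℤ_n`, every nonempty proper subset that is not
a union of `K`-cosets is `n`-expandable. -/
theorem stmt7 {n : ℕ} [NeZero n] (hev : Even n) (δa : ZMod n → ZMod n)
    (hstd : Standardized δa) (hcr : CompletelyReachable δa)
    (hK : orbitSubgroup δa = AddSubgroup.zmultiples (2 : ZMod n))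
    (S : Set (ZMod n)) (hne : S.Nonempty) (hprop : S ≠ Set.univ)
    (hnc : ¬ IsUnionOfCosets (orbitSubgroup δa) S) :
    Expandable δa n S := by
  classical
  have hex := exists_not_invariant δa S hnc
  let j := Nat.find hex
  have hj : ¬ ∀ x, x + δa^[j] 0 ∈ S ↔ x ∈ S := Nat.find_spec hex
  have hmin : ∀ i < j, ∀ x, x + δa^[i] 0 ∈ S ↔ x ∈ S :=
    fun i hi => not_not.1 (Nat.find_min hex hi)
  have hjpos : 0 < j := by
    rw [Nat.pos_iff_ne_zero]
    intro h
    rw [h] at hj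
    simp at hj
  obtain ⟨k, hkj, hk⟩ : ∃ k, k + δa^[j] 0 ∈ S ∧ k ∉ S := by
    by_contra! h
    exact hj (invariant_of_imp S _ h)
  have hne' : ∀ i i', i < i' → i' < j → δa^[i] 0 ≠ δa^[i'] 0 := by
    intro i i' hii hi' heq
    -- A repetition makes `d_j` equal to the earlier term of index `j - i' + i`.
    have : δa^[j] 0 = δa^[j - i' + i] 0 := by
      rw [Function.iterate_add_apply, heq, ← Function.iterate_add_apply]
      congr 2
      omega
    exact hj (this ▸ hmin (j - i' + i) (by omega))
  obtain ⟨i, hi, hval⟩ : ∃ i < j, j + (k - δa^[i] 0).val ≤ n := by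
    by_contra! h
    have hcard := Finset.card_le_card_of_injOn (s := Finset.range j)
      (t := Finset.Ico (n + 1 - j) n) (fun i => (k - δa^[i] 0).val)
      (by
        intro i hi
        have h1 := h i (Finset.mem_range.1 hi)
        have h2 := ZMod.val_lt (k - δa^[i] 0)
        simp only [Finset.coe_Ico, Set.mem_Ico]
        omega)
      (by
        intro i hi i' hi' heq
        have heq' : δa^[i] 0 = δa^[i'] 0 := sub_right_injective (ZMod.val_injective n heq)
        simp only [Finset.coe_range, Set.mem_Iio] at hi hi'
        rcases lt_trichotomy i i' with hlt | rfl | hlt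
        · exact absurd heq' (hne' _ _ hlt hi')
        · rfl
        · exact absurd heq'.symm (hne' _ _ hlt hi))
    have hn := NeZero.pos n
    simp only [Finset.card_range, Nat.card_Ico] at hcard
    omega
  refine ⟨List.replicate j Letter.a ++ List.replicate (k - δa^[i] 0).val Letter.b, by simpa using hval,
    expands_word δa hstd hcr S j _ ?_ ?_⟩
  · rw [ZMod.natCast_zmod_val, ← hmin i hi, sub_add_cancel]
    exact hk
  · rw [ZMod.natCast_zmod_val, ← hmin i hi]
    convert hkj using 1
    ring
end
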